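/- Let Γ ⊂ ℂ be a quasismooth Jordan curve. For every c > 0 there is a constant c′ > 0 depending only on Γ and c such that for all finite points z₁, z₂, z₃ in the closure of Ω, with t_j := Φ(z_j) (j = 1,2,3): if |z₁ − z₂| ≤ c |z₁ − z₃| then |t₁ − t₂| ≤ c′ |t₁ − t₃|, and if |t₁ − t₂| ≤ c |t₁ − t₃| then |z₁ − z₂| ≤ c′ |z₁ − z₃|. -/

import Mathlib

open MeasureTheory Metric Set Filter Bornology Complex
open scoped ENNReal NNReal Topology

noncomputable section

/-- `Γ` is a Jordan curve: the image of an injective continuous map of the unit circle. -/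
def IsJordanCurve (Γ : Set ℂ) : Prop :=
  ∃ γ : ℂ → ℂ, ContinuousOn γ (Metric.sphere (0:ℂ) 1) ∧
    Set.InjOn γ (Metric.sphere (0:ℂ) 1) ∧ Γ = γ '' (Metric.sphere (0:ℂ) 1)

/-- A (closed) subarc of `Γ`: a closed connected subset. -/
def IsSubarc (Γ J : Set ℂ) : Prop :=
  J ⊆ Γ ∧ IsClosed J ∧ IsPreconnected J

/-- `|Γ(z₁,z₂)|`: the length (1-dimensional Hausdorff measure) of the shorter subarc of `Γ`
joining `z₁` and `z₂`, described as the infimum of lengths of closed connected subsets of `Γ`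
containing both points. -/
def shorterArcLength (Γ : Set ℂ) (z₁ z₂ : ℂ) : ℝ≥0∞ :=
  ⨅ (J : Set ℂ) (_ : IsSubarc Γ J ∧ z₁ ∈ J ∧ z₂ ∈ J), μH[1] J

/-- `J` is (a realization of) the shorter arc `Γ(z₁,z₂)` of `Γ` between `z₁` and `z₂`. -/
def IsShorterArc (Γ : Set ℂ) (z₁ z₂ : ℂ) (J : Set ℂ) : Prop :=
  IsSubarc Γ J ∧ z₁ ∈ J ∧ z₂ ∈ J ∧ μH[1] J = shorterArcLength Γ z₁ z₂

/-- `Γ` is quasismooth (in the sense of Lavrentiev) with constant `Λ ≥ 1`: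
`|Γ(z₁,z₂)| ≤ Λ |z₁ - z₂|`. -/
def IsQuasismooth (Γ : Set ℂ) (Λ : ℝ) : Prop :=
  1 ≤ Λ ∧ ∀ z₁ ∈ Γ, ∀ z₂ ∈ Γ,
    shorterArcLength Γ z₁ z₂ ≤ ENNReal.ofReal (Λ * dist z₁ z₂)

/-- The union of the unbounded connected components of `Γᶜ`; for a Jordan curve `Γ` this is
the (unique) unbounded component `Ω` of the complement of `Γ`. -/
def unboundedComponent (Γ : Set ℂ) : Set ℂ :=
  {z | z ∉ Γ ∧ ¬ Bornology.IsBounded (connectedComponentIn Γᶜ z)}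

/-- `d(A,B) := inf {|z-ζ| : z ∈ A, ζ ∈ B}`. -/
def setDist (A B : Set ℂ) : ℝ := sInf (Set.image2 dist A B)

/-- The exterior `𝔻*` of the closed unit disk (finite part). -/
def extDisk : Set ℂ := {w : ℂ | 1 < ‖w‖}

/-- `Φ` is the conformal (holomorphic bijective) map of `Ω` onto `𝔻* = {|w| > 1}` normalized
by `Φ(∞) = ∞` and `Φ'(∞) := lim_{z→∞} Φ(z)/z > 0`. -/
def IsExtConformal (Ω : Set ℂ) (Φ : ℂ → ℂ) : Prop :=
  DifferentiableOn ℂ Φ Ω ∧ Set.BijOn Φ Ω extDisk ∧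
    ∃ c : ℝ, 0 < c ∧
      Filter.Tendsto (fun z => Φ z / z) (Bornology.cobounded ℂ) (nhds (c : ℂ))

/-- `Φ` additionally extends to a homeomorphism of `closure Ω` onto `{|w| ≥ 1}`. -/
def IsExtConformalClosure (Ω : Set ℂ) (Φ : ℂ → ℂ) : Prop :=
  IsExtConformal Ω Φ ∧ ContinuousOn Φ (closure Ω) ∧
    Set.BijOn Φ (closure Ω) {w : ℂ | 1 ≤ ‖w‖}

/-- The level curve `Γ_δ := {ζ ∈ Ω : |Φ(ζ)| = 1 + δ}`. -/
def levelCurve (Ω : Set ℂ) (Φ : ℂ → ℂ) (δ : ℝ) : Set ℂ :=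
  {ζ ∈ Ω | ‖Φ ζ‖ = 1 + δ}

/-- `ρ_δ(z) := d({z}, Γ_δ)`. -/
def rho (Ω : Set ℂ) (Φ : ℂ → ℂ) (δ : ℝ) (z : ℂ) : ℝ :=
  Metric.infDist z (levelCurve Ω Φ δ)

/-- `ν ∈ A∞(Γ)` with constant `lam ≥ 1`: `ν(J) ≤ lam · ν(S)` for every subarc `J ⊂ Γ` and
every Borel set `S ⊂ J` with `|J| ≤ 2|S|`. -/
def IsAInftyMeasure (Γ : Set ℂ) (ν : MeasureTheory.Measure ℂ) (lam : ℝ) : Prop :=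
  1 ≤ lam ∧ ∀ J S : Set ℂ, IsSubarc Γ J → S ⊆ J → MeasurableSet S →
    μH[1] J ≤ 2 * μH[1] S → ν J ≤ ENNReal.ofReal lam * ν S

/-!
Let `f` be the inverse of `Φ`. If for all `s` between `s₁` and `s₂` the circle of radius `s` about
`Φ z₁` contains an arc whose image under `f` crosses the annulus of radii `r < R` about `z₁`, then
each of these images has logarithmic length at least `log (R / r)`, and comparison with the
logarithmic area of the annulus gives `log (s₂ / s₁) * log (R / r) ≤ (2 * π) ^ 2`. A curve of
bounded turning is linearly locally connected, and so is the closure of its exterior. Hence every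
circle separating `Φ z₂` from `Φ z₃` contains such an arc, with `r` and `R` comparable to
`dist z₁ z₃` and `dist z₁ z₂`, and `f` has controlled distortion at `Φ z₁`, `Φ z₂`, `Φ z₃` as soon
as `dist (Φ z₁) (Φ z₂) ≤ dist (Φ z₁) (Φ z₃) / 2`.

Any two points of `{|w| ≥ 1}` have an approximate midpoint there, and chains of such midpoints
replace the factor `1 / 2` by any other. Conversely, if `dist (Φ z₁) (Φ z₂)` were much larger than
`dist (Φ z₁) (Φ z₃)`, then points at the many dyadic scales in between would have images under `f`
which are separated by a multiple of `dist z₁ z₃` but lie in a ball of radius a multiple of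
`dist z₁ z₂`; by compactness `dist z₁ z₂ / dist z₁ z₃` is then large too.
-/

section Quasisymmetry

variable {X Y : Type*} [PseudoMetricSpace X] [PseudoMetricSpace Y] {f : X → Y} {s : Set X}

/-- `f` is weakly quasisymmetric on `s`: it distorts the relative distances of two points of `s`
from a third one in a controlled way. Unlike for quasisymmetric maps, `c'` is not required to
tend to `0` with `c`. -/
def IsWeaklyQuasisymmetricOn (f : X → Y) (s : Set X) : Prop :=
  ∀ c > (0 : ℝ), ∃ c' > (0 : ℝ), ∀ x ∈ s, ∀ y ∈ s, ∀ z ∈ s,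
    dist x y ≤ c * dist x z → dist (f x) (f y) ≤ c' * dist (f x) (f z)

/-- Any two points of `s` have an approximate midpoint in `s`, no further from either of them than
`lam` times their distance. For `lam < 1` this is the substitute for convexity which allows
passing from one scale to a smaller one. -/
def HasQuasiMidpoints (s : Set X) (lam : ℝ) : Prop :=
  ∀ a ∈ s, ∀ b ∈ s, ∃ m ∈ s, dist a m ≤ lam * dist a b ∧ dist m b ≤ lam * dist a b

theorem HasQuasiMidpoints.le_pow_two_pow_mul {lam K δ : ℝ} {D : X → ℝ}
    (hs : HasQuasiMidpoints s lam) (hlam : 0 ≤ lam) (hK : 0 ≤ K)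
    (hD : ∀ a ∈ s, ∀ b ∈ s, dist a b ≤ δ → D b ≤ K * D a) (k : ℕ) {a b : X} (ha : a ∈ s)
    (hb : b ∈ s) (hab : lam ^ k * dist a b ≤ δ) : D b ≤ K ^ 2 ^ k * D a := by
  induction k generalizing a b with
  | zero => simpa using hD a ha b hb (by simpa using hab)
  | succ k ih =>
    obtain ⟨m, hm, ham, hmb⟩ := hs a ha b hb
    have shrink {x y : X} (hxy : dist x y ≤ lam * dist a b) : lam ^ k * dist x y ≤ δ :=
      (mul_le_mul_of_nonneg_left hxy (by positivity)).trans (by rwa [← mul_assoc, ← pow_succ])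
    calc D b ≤ K ^ 2 ^ k * D m := ih hm hb (shrink hmb)
      _ ≤ K ^ 2 ^ k * (K ^ 2 ^ k * D a) := by gcongr; exact ih ha hm (shrink ham)
      _ = K ^ 2 ^ (k + 1) * D a := by rw [← mul_assoc, ← pow_add, ← two_mul, ← pow_succ']

/-- The quantity propagated along chains of quasi-midpoints is
`dist (f t) (f x) + dist (f x) (f z)`: at least one of `x`, `z` is at distance `≥ dist x z / 2`
from any given point. -/
theorem HasQuasiMidpoints.isWeaklyQuasisymmetricOn {lam H : ℝ} (hs : HasQuasiMidpoints s lam)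
    (hlam₀ : 0 ≤ lam) (hlam₁ : lam < 1) (hH : 0 ≤ H)
    (hf : ∀ x ∈ s, ∀ y ∈ s, ∀ z ∈ s, dist x y ≤ dist x z / 2 →
      dist (f x) (f y) ≤ H * dist (f x) (f z)) :
    IsWeaklyQuasisymmetricOn f s := by
  intro c hc
  obtain ⟨k, hk⟩ := exists_pow_lt_of_lt_one (by positivity : 0 < 1 / (4 * c)) hlam₁
  refine ⟨(1 + H) ^ 2 ^ k, by positivity, fun x hx y hy z hz hxy => ?_⟩
  have one_step : ∀ a ∈ s, ∀ b ∈ s, dist a b ≤ dist x z / 4 →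
      dist (f b) (f x) + dist (f x) (f z) ≤ (1 + H) * (dist (f a) (f x) + dist (f x) (f z)) := by
    intro a ha b hb hab
    have hab' : dist (f a) (f b) ≤ H * (dist (f a) (f x) + dist (f x) (f z)) := by
      have := dist_triangle_left x z a
      rcases le_total (dist a x) (dist a z) with hle | hle
      · refine (hf a ha b hb z hz (by linarith)).trans ?_
        gcongr
        exact dist_triangle _ _ _
      · refine (hf a ha b hb x hx (by linarith)).trans ?_
        gcongr
        exact le_add_of_nonneg_right dist_nonneg
    linarith [dist_triangle_left (f b) (f x) (f a)]
  have hscale : lam ^ k * dist x y ≤ dist x z / 4 :=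
    calc lam ^ k * dist x y ≤ 1 / (4 * c) * (c * dist x z) := by gcongr
      _ = dist x z / 4 := by field_simp
  have hchain := hs.le_pow_two_pow_mul hlam₀ (by positivity) one_step k hx hy hscale
  rw [dist_self, zero_add, dist_comm (f y)] at hchain
  linarith [dist_nonneg (x := f x) (y := f z)]

theorem exists_dist_eq_of_isPreconnected (hs : IsPreconnected s) {x y : X} (hx : x ∈ s) (hy : y ∈ s)
    {r : ℝ} (hr₀ : 0 ≤ r) (hr : r ≤ dist x y) : ∃ z ∈ s, dist x z = r :=
  hs.intermediate_value hx hy (by fun_prop) ⟨by simpa using hr₀, hr⟩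

theorem exists_forall_exists_dist_lt_of_totallyBounded (hs : TotallyBounded s) {δ : ℝ}
    (hδ : 0 < δ) : ∃ N : ℕ, ∀ u : ℕ → X, (∀ i, u i ∈ s) →
      ∃ i j, i < j ∧ j ≤ N ∧ dist (u i) (u j) < δ := by
  obtain ⟨T, hT, hcover⟩ := Metric.totallyBounded_iff.1 hs (δ / 2) (half_pos hδ)
  lift T to Finset X using hT
  refine ⟨T.card, fun u hu => ?_⟩
  have hnear (i : ℕ) : ∃ x ∈ T, dist (u i) x < δ / 2 := by simpa using hcover (hu i)
  choose x hxT hx using hnear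
  obtain ⟨i, hi, j, hj, hne, hij⟩ := Finset.exists_ne_map_eq_of_card_lt_of_maps_to
    (s := Finset.range (T.card + 1)) (t := T) (f := x) (by simp) (fun i _ => hxT i)
  rw [Finset.mem_range, Nat.lt_succ_iff] at hi hj
  have hdist : dist (u i) (u j) < δ :=
    calc dist (u i) (u j) ≤ dist (u i) (x i) + dist (u j) (x i) := dist_triangle_right _ _ _
      _ < δ / 2 + δ / 2 := add_lt_add (hx i) (hij ▸ hx j)
      _ = δ := add_halves δ
  rcases hne.lt_or_gt with hlt | hlt
  exacts [⟨i, j, hlt, hj, hdist⟩, ⟨j, i, hlt, hi, by rwa [dist_comm]⟩]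

theorem exists_forall_exists_dist_lt_mul {E : Type*} [NormedAddCommGroup E] [NormedSpace ℝ E]
    [ProperSpace E] (H : ℝ) {δ : ℝ} (hδ : 0 < δ) :
    ∃ N : ℕ, ∀ (p : E) (L : ℝ), 0 < L → ∀ u : ℕ → E, (∀ i, dist p (u i) ≤ H * L) →
      ∃ i j, i < j ∧ j ≤ N ∧ dist (u i) (u j) < δ * L := by
  obtain ⟨N, hN⟩ := exists_forall_exists_dist_lt_of_totallyBounded
    (isCompact_closedBall (0 : E) H).totallyBounded hδ
  refine ⟨N, fun p L hL u hu => ?_⟩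
  have hnorm (v w : E) : dist (L⁻¹ • v) (L⁻¹ • w) = dist v w / L := by
    rw [dist_smul₀, norm_inv, Real.norm_of_nonneg hL.le, inv_mul_eq_div]
  obtain ⟨i, j, hij, hjN, hdist⟩ := hN (fun i => L⁻¹ • (u i - p)) fun i => by
    rw [mem_closedBall, ← smul_zero L⁻¹, hnorm, dist_zero_right, ← dist_eq_norm, dist_comm,
      div_le_iff₀ hL]
    exact hu i
  refine ⟨i, j, hij, hjN, ?_⟩
  rwa [hnorm, dist_sub_right, div_lt_iff₀ hL] at hdist

/-- The `u i` are chosen on the spheres about `x` of radii `2⁻ⁱ * dist x y`. -/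
theorem IsWeaklyQuasisymmetricOn.exists_separated_seq (hf : IsWeaklyQuasisymmetricOn f s)
    (hs : IsPreconnected s) : ∃ H > (0 : ℝ), ∀ (N : ℕ), ∀ x ∈ s, ∀ y ∈ s, ∀ z ∈ s,
      2 ^ N * dist x z ≤ dist x y → ∃ u : ℕ → X,
        (∀ i, dist (f x) (f (u i)) ≤ H * dist (f x) (f y)) ∧
        ∀ i j, i < j → i ≤ N → dist (f x) (f z) ≤ H ^ 2 * dist (f (u i)) (f (u j)) := by
  obtain ⟨H, hH, hfH⟩ := hf 2 two_pos
  refine ⟨H, hH, fun N x hx y hy z hz hxyz => ?_⟩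
  have hradius (i : ℕ) : (2⁻¹ : ℝ) ^ i * dist x y ≤ dist x y :=
    mul_le_of_le_one_left dist_nonneg (pow_le_one₀ (by norm_num) (by norm_num))
  choose u hus hu using fun i : ℕ =>
    exists_dist_eq_of_isPreconnected hs hx hy (by positivity) (hradius i)
  refine ⟨u, fun i => hfH x hx _ (hus i) y hy ?_, fun i j hij hiN => ?_⟩
  · rw [hu]
    linarith [hradius i, dist_nonneg (x := x) (y := y)]
  have hxz : dist (f x) (f z) ≤ H * dist (f (u i)) (f x) := by
    rw [dist_comm (f (u i))]
    refine hfH x hx z hz _ (hus i) ?_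
    rw [hu, inv_pow, ← div_eq_inv_mul]
    have : dist x z ≤ dist x y / 2 ^ i := by
      rw [le_div_iff₀ (by positivity), mul_comm]
      refine le_trans ?_ hxyz
      gcongr
      exact one_le_two
    linarith [dist_nonneg (x := x) (y := z)]
  have hux : dist (f (u i)) (f x) ≤ H * dist (f (u i)) (f (u j)) := by
    refine hfH _ (hus i) x hx _ (hus j) ?_
    have hhalf : (2⁻¹ : ℝ) ^ j ≤ 2⁻¹ ^ i / 2 :=
      calc (2⁻¹ : ℝ) ^ j ≤ 2⁻¹ ^ (i + 1) :=
            pow_le_pow_of_le_one (by norm_num) (by norm_num) hij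
        _ = _ := by rw [pow_succ]; ring
    have htri := dist_triangle_right (u i) x (u j)
    rw [dist_comm (u i) x, hu, hu] at htri
    rw [dist_comm (u i) x, hu]
    linarith [mul_le_mul_of_nonneg_right hhalf (dist_nonneg (x := x) (y := y))]
  calc dist (f x) (f z) ≤ H * (H * dist (f (u i)) (f (u j))) := hxz.trans (by gcongr)
    _ = _ := by ring

theorem IsWeaklyQuasisymmetricOn.of_rightInvOn {E : Type*} [NormedAddCommGroup E]
    [NormedSpace ℝ E] [ProperSpace E] {f : X → E} {g : E → X} {t : Set E}
    (hf : IsWeaklyQuasisymmetricOn f s) (hs : IsPreconnected s) (hg : MapsTo g t s)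
    (hfg : RightInvOn g f t) : IsWeaklyQuasisymmetricOn g t := by
  intro c hc
  obtain ⟨H, hH, hsep⟩ := hf.exists_separated_seq hs
  obtain ⟨N, hN⟩ := exists_forall_exists_dist_lt_mul (E := E) H
    (by positivity : 0 < (c * H ^ 2)⁻¹)
  refine ⟨2 ^ N, by positivity, fun x hx y hy z hz hxyz => ?_⟩
  by_contra! hlt
  have hxy : 0 < dist x y := by
    refine dist_pos.2 fun hxy => ?_
    rw [hxy, dist_self] at hlt
    exact hlt.not_ge (by positivity)
  obtain ⟨u, hu, hu'⟩ := hsep N _ (hg hx) _ (hg hy) _ (hg hz) hlt.le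
  rw [hfg hx, hfg hy] at hu
  rw [hfg hx, hfg hz] at hu'
  obtain ⟨i, j, hij, hjN, hdist⟩ := hN x _ hxy (f ∘ u) hu
  refine lt_irrefl (dist x y) ?_
  calc dist x y ≤ c * dist x z := hxyz
    _ ≤ c * (H ^ 2 * dist (f (u i)) (f (u j))) := by
      gcongr
      exact hu' i j hij (hij.le.trans hjN)
    _ < c * (H ^ 2 * ((c * H ^ 2)⁻¹ * dist x y)) := by gcongr; exact hdist
    _ = dist x y := by field_simp

end Quasisymmetry

section ExteriorOfDisk

theorem isPathConnected_setOf_le_norm {E : Type*} [NormedAddCommGroup E] [NormedSpace ℝ E]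
    (hE : 1 < Module.rank ℝ E) (r : ℝ) : IsPathConnected {x : E | r ≤ ‖x‖} := by
  have hpolar : {x : E | r ≤ ‖x‖} =
      (fun p : ℝ × E => p.1 • p.2) '' (Ici (max r 0) ×ˢ sphere (0 : E) 1) := by
    ext x
    simp only [mem_ofPred_eq, mem_image, mem_prod, mem_Ici, mem_sphere_zero_iff_norm, Prod.exists]
    constructor
    · intro hx
      have : Nontrivial E := (rank_pos_iff_nontrivial (R := ℝ)).1 (zero_lt_one.trans hE)
      rcases eq_or_ne x 0 with rfl | hx₀
      · obtain ⟨v, hv⟩ := exists_norm_eq E zero_le_one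
        exact ⟨0, v, ⟨by simpa using hx, hv⟩, zero_smul ℝ v⟩
      · exact ⟨‖x‖, ‖x‖⁻¹ • x, ⟨max_le hx (norm_nonneg x), by simp [norm_smul, hx₀]⟩,
          smul_inv_smul₀ (norm_ne_zero_iff.2 hx₀) x⟩
    · rintro ⟨ρ, v, ⟨hρ, hv⟩, rfl⟩
      rw [norm_smul, hv, mul_one]
      exact (le_max_left r 0).trans (hρ.trans (Real.le_norm_self ρ))
  rw [hpolar]
  exact (((convex_Ici _).isPathConnected nonempty_Ici).prod
    (isPathConnected_sphere hE 0 zero_le_one)).image continuous_smul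

theorem isPathConnected_compl_ball {E : Type*} [NormedAddCommGroup E] [NormedSpace ℝ E]
    (hE : 1 < Module.rank ℝ E) (x : E) (r : ℝ) : IsPathConnected (ball x r)ᶜ := by
  have himage : (ball x r)ᶜ = (· + x) '' {y : E | r ≤ ‖y‖} := by
    ext z
    simp [dist_eq_norm, ← sub_eq_add_neg]
  rw [himage]
  exact (isPathConnected_setOf_le_norm hE r).image (by fun_prop)

/-- The quasi-midpoint is a vertex of a right isosceles triangle with hypotenuse `ab`. There are two
such vertices, and by the parallelogram law their squared norms add up to `‖a‖ ^ 2 + ‖b‖ ^ 2`. -/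
theorem hasQuasiMidpoints_setOf_le_norm {r : ℝ} (hr : 0 ≤ r) :
    HasQuasiMidpoints {w : ℂ | r ≤ ‖w‖} (√2)⁻¹ := by
  intro a ha b hb
  set p : ℂ := (a + b) / 2 with hp
  set q : ℂ := (b - a) / 2 with hq
  have hpa : p - q = a := by rw [hp, hq]; ring
  have hpb : p + q = b := by rw [hp, hq]; ring
  have hqdist : (√2)⁻¹ * dist a b = √2 * ‖q‖ := by
    rw [dist_comm, dist_eq_norm, hq, norm_div, norm_ofNat]
    field_simp
    rw [Real.sq_sqrt zero_le_two, mul_comm]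
  have hvertex (ε : ℂ) (hε : ‖1 + ε‖ = √2) (hε' : ‖1 - ε‖ = √2) :
      dist a (p + ε * q) ≤ (√2)⁻¹ * dist a b ∧ dist (p + ε * q) b ≤ (√2)⁻¹ * dist a b := by
    rw [hqdist, dist_comm a, dist_eq_norm, dist_comm _ b, dist_eq_norm, ← hpa, ← hpb,
      show p + ε * q - (p - q) = (1 + ε) * q by ring,
      show p + q - (p + ε * q) = (1 - ε) * q by ring, norm_mul, norm_mul, hε, hε']
    exact ⟨le_rfl, le_rfl⟩
  have hplus : ‖1 + I‖ = √2 := by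
    rw [Complex.norm_def, normSq_apply]
    norm_num
  have hminus : ‖1 - I‖ = √2 := by
    rw [Complex.norm_def, normSq_apply]
    norm_num
  have hsum : ‖p + I * q‖ ^ 2 + ‖p + -I * q‖ ^ 2 = ‖a‖ ^ 2 + ‖b‖ ^ 2 := by
    rw [neg_mul, ← sub_eq_add_neg, ← hpa, ← hpb]
    have h₁ := parallelogram_law_with_norm ℝ p (I * q)
    have h₂ := parallelogram_law_with_norm ℝ p q
    rw [norm_mul, norm_I, one_mul] at h₁
    linarith
  have hmax : r ≤ ‖p + I * q‖ ∨ r ≤ ‖p + -I * q‖ := by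
    by_contra! hlt
    have ha' : r ^ 2 ≤ ‖a‖ ^ 2 := pow_le_pow_left₀ hr ha 2
    have hb' : r ^ 2 ≤ ‖b‖ ^ 2 := pow_le_pow_left₀ hr hb 2
    linarith [pow_lt_pow_left₀ hlt.1 (norm_nonneg _) two_ne_zero,
      pow_lt_pow_left₀ hlt.2 (norm_nonneg _) two_ne_zero]
  rcases hmax with hm | hm
  · exact ⟨p + I * q, hm, hvertex I hplus hminus⟩
  · exact ⟨p + -I * q, hm, hvertex (-I) (by rwa [← sub_eq_add_neg]) (by rwa [sub_neg_eq_add])⟩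

end ExteriorOfDisk

section LengthArea

theorem ofReal_sub_le_lintegral_enorm_deriv {v v' : ℝ → ℝ} {α β p q φ₁ φ₂ : ℝ}
    (hv : ContinuousOn v (Icc α β))
    (hv' : ∀ φ ∈ Ioo α β ∩ v ⁻¹' Ioo p q, HasDerivAt v (v' φ) φ)
    (hφ₁ : φ₁ ∈ Icc α β) (hφ₂ : φ₂ ∈ Icc α β) (hp : v φ₁ ≤ p) (hq : q ≤ v φ₂) :
    ENNReal.ofReal (q - p) ≤ ∫⁻ φ in Ioo α β ∩ v ⁻¹' Ioo p q, ‖v' φ‖ₑ := by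
  have hmeas : MeasurableSet (Ioo α β ∩ v ⁻¹' Ioo p q) :=
    ((hv.mono Ioo_subset_Icc_self).isOpen_inter_preimage isOpen_Ioo isOpen_Ioo).measurableSet
  have hsub : Ioo p q \ {v α, v β} ⊆ v '' (Ioo α β ∩ v ⁻¹' Ioo p q) := by
    rintro y ⟨hy, hne⟩
    obtain ⟨φ, hφ, rfl⟩ := isPreconnected_Icc.intermediate_value hφ₁ hφ₂ hv
      ⟨hp.trans hy.1.le, hy.2.le.trans hq⟩
    simp only [mem_insert_iff, mem_singleton_iff, not_or] at hne
    exact ⟨φ, ⟨⟨hφ.1.lt_of_ne fun h => hne.1 (by rw [h]),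
      hφ.2.lt_of_ne fun h => hne.2 (by rw [h])⟩, hy⟩, rfl⟩
  calc ENNReal.ofReal (q - p)
      = volume (Ioo p q \ {v α, v β}) := by
        rw [measure_sdiff_null ((toFinite _).measure_zero _), Real.volume_Ioo]
    _ ≤ volume (v '' (Ioo α β ∩ v ⁻¹' Ioo p q)) := measure_mono hsub
    _ ≤ ∫⁻ φ in Ioo α β ∩ v ⁻¹' Ioo p q,
          ENNReal.ofReal |(ContinuousLinearMap.toSpanSingleton ℝ (v' φ)).det| :=
        addHaar_image_le_lintegral_abs_det_fderiv volume hmeas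
          fun φ hφ => (hv' φ hφ).hasFDerivAt.hasFDerivWithinAt
    _ = ∫⁻ φ in Ioo α β ∩ v ⁻¹' Ioo p q, ‖v' φ‖ₑ := by
        simp only [ContinuousLinearMap.det_toSpanSingleton, Real.enorm_eq_ofReal_abs]

theorem exists_hasDerivAt_log_norm {E : Type*} [NormedAddCommGroup E] [InnerProductSpace ℝ E]
    {F : ℝ → E} {F' : E} {φ : ℝ} (hF : HasDerivAt F F' φ) (h₀ : F φ ≠ 0) :
    ∃ l : ℝ, HasDerivAt (fun φ => Real.log ‖F φ‖) l φ ∧ |l| ≤ ‖F'‖ / ‖F φ‖ := by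
  have hpos : 0 < ‖F φ‖ := norm_pos_iff.2 h₀
  refine ⟨inner ℝ (F φ) F' / ‖F φ‖ ^ 2, ?_, ?_⟩
  · have hsq := (hF.norm_sq.log (pow_ne_zero 2 hpos.ne')).div_const 2
    simp only [Real.log_pow, Nat.cast_ofNat] at hsq
    exact (hsq.congr_deriv (by ring)).congr_of_eventuallyEq (.of_forall fun φ => by ring)
  · rw [abs_div, abs_of_nonneg (sq_nonneg ‖F φ‖), div_le_div_iff₀ (by positivity) hpos]
    calc |inner ℝ (F φ) F'| * ‖F φ‖ ≤ ‖F φ‖ * ‖F'‖ * ‖F φ‖ := by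
          gcongr
          exact abs_real_inner_le_norm _ _
      _ = ‖F'‖ * ‖F φ‖ ^ 2 := by ring

/-- The open annulus `r < ‖w - w₀‖ < R`. -/
def openAnnulus (w₀ : ℂ) (r R : ℝ) : Set ℂ :=
  {w | ‖w - w₀‖ ∈ Ioo r R}

theorem isOpen_openAnnulus (w₀ : ℂ) (r R : ℝ) : IsOpen (openAnnulus w₀ r R) :=
  isOpen_Ioo.preimage (by fun_prop)

/-- The logarithm is cut off below at `r` in order to be continuous even where `F` takes the value
`w₀`. -/
theorem ofReal_log_div_le_lintegral {F F' : ℝ → ℂ} {w₀ : ℂ} {α β r R φ₁ φ₂ : ℝ}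
    (hF : ContinuousOn F (Icc α β)) (hF' : ∀ φ ∈ Ioo α β, HasDerivAt F (F' φ) φ)
    (hr : 0 < r) (hR : 0 < R) (hφ₁ : φ₁ ∈ Icc α β) (hφ₂ : φ₂ ∈ Icc α β)
    (hFr : ‖F φ₁ - w₀‖ ≤ r) (hFR : R ≤ ‖F φ₂ - w₀‖) :
    ENNReal.ofReal (Real.log (R / r)) ≤
      ∫⁻ φ in Ioo α β ∩ F ⁻¹' openAnnulus w₀ r R, ‖F' φ‖ₑ / ‖F φ - w₀‖ₑ := by
  set v : ℝ → ℝ := fun φ => Real.log (max r ‖F φ - w₀‖) with hv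
  have hmax (φ : ℝ) : 0 < max r ‖F φ - w₀‖ := lt_max_of_lt_left hr
  have hpre : v ⁻¹' Ioo (Real.log r) (Real.log R) = F ⁻¹' openAnnulus w₀ r R := by
    ext φ
    simp only [hv, openAnnulus, mem_preimage, mem_ofPred_eq, mem_Ioo,
      Real.log_lt_log_iff hr (hmax φ), Real.log_lt_log_iff (hmax φ) hR, lt_max_iff, max_lt_iff]
    grind
  have hderiv : ∀ φ ∈ Ioo α β ∩ F ⁻¹' openAnnulus w₀ r R,
      ∃ l, HasDerivAt v l φ ∧ |l| ≤ ‖F' φ‖ / ‖F φ - w₀‖ := by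
    rintro φ ⟨hφ, hφr, -⟩
    have hFd := (hF' φ hφ).sub_const w₀
    obtain ⟨l, hl, hle⟩ := exists_hasDerivAt_log_norm hFd (norm_pos_iff.1 (hr.trans hφr))
    refine ⟨l, hl.congr_of_eventuallyEq ?_, hle⟩
    filter_upwards [hFd.continuousAt.norm.eventually (lt_mem_nhds hφr)] with ψ hψ
    rw [hv]
    simp only [max_eq_right hψ.le]
  choose! v' hv' hle using hderiv
  have hvc : ContinuousOn v (Icc α β) :=
    (continuousOn_const.sup (hF.sub continuousOn_const).norm).log fun φ _ => (hmax φ).ne'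
  have hmeas : MeasurableSet (Ioo α β ∩ F ⁻¹' openAnnulus w₀ r R) :=
    ((hF.mono Ioo_subset_Icc_self).isOpen_inter_preimage isOpen_Ioo
      (isOpen_openAnnulus _ _ _)).measurableSet
  calc ENNReal.ofReal (Real.log (R / r)) = ENNReal.ofReal (Real.log R - Real.log r) := by
        rw [Real.log_div hR.ne' hr.ne']
    _ ≤ ∫⁻ φ in Ioo α β ∩ F ⁻¹' openAnnulus w₀ r R, ‖v' φ‖ₑ := by
        rw [← hpre] at hv' ⊢
        exact ofReal_sub_le_lintegral_enorm_deriv hvc hv' hφ₁ hφ₂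
          (Real.log_le_log (hmax _) (max_le le_rfl hFr))
          (Real.log_le_log hR (hFR.trans (le_max_right _ _)))
    _ ≤ ∫⁻ φ in Ioo α β ∩ F ⁻¹' openAnnulus w₀ r R, ‖F' φ‖ₑ / ‖F φ - w₀‖ₑ := by
        refine setLIntegral_mono' hmeas fun φ hφ => ?_
        rw [Real.enorm_eq_ofReal_abs, ← ofReal_norm, ← ofReal_norm,
          ← ENNReal.ofReal_div_of_pos (hr.trans hφ.2.1)]
        exact ENNReal.ofReal_le_ofReal (hle φ hφ)

theorem setLIntegral_Ioo_inv {a b : ℝ} (ha : 0 < a) (hab : a ≤ b) :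
    ∫⁻ x in Ioo a b, (ENNReal.ofReal x)⁻¹ = ENNReal.ofReal (Real.log (b / a)) := by
  have hint : IntegrableOn (fun x : ℝ => x⁻¹) (Ioc a b) :=
    (intervalIntegrable_iff_integrableOn_Ioc_of_le hab).1
      (intervalIntegral.intervalIntegrable_inv
        (fun x hx => (ha.trans_le (uIcc_of_le hab ▸ hx).1).ne') continuousOn_id)
  rw [← integral_inv_of_pos ha (ha.trans_le hab), intervalIntegral.integral_of_le hab,
    ofReal_integral_eq_lintegral_ofReal hint, restrict_Ioo_eq_restrict_Ioc]
  · exact setLIntegral_congr_fun measurableSet_Ioc fun x hx =>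
      (ENNReal.ofReal_inv_of_pos (ha.trans hx.1)).symm
  · filter_upwards [self_mem_ae_restrict measurableSet_Ioc] with x hx
    exact inv_nonneg.2 (ha.trans hx.1).le

theorem lintegral_eq_lintegral_circleMap (c : ℂ) {g : ℂ → ℝ≥0∞} (hg : Measurable g) :
    ∫⁻ z, g z = ∫⁻ r in Ioi (0 : ℝ), ∫⁻ θ in Ioo (-Real.pi) Real.pi,
      ENNReal.ofReal r * g (circleMap c r θ) := by
  have hpolar (p : ℝ × ℝ) : c + Complex.polarCoord.symm p = circleMap c p.1 p.2 := by
    rw [Complex.polarCoord_symm_apply, circleMap, exp_mul_I, ofReal_cos, ofReal_sin]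
  rw [← lintegral_add_left_eq_self g c, ← Complex.lintegral_comp_polarCoord_symm,
    polarCoord_target, Measure.volume_eq_prod]
  simp only [hpolar, smul_eq_mul]
  refine setLIntegral_prod _ (Measurable.aemeasurable ?_)
  have hcircle : Measurable fun p : ℝ × ℝ => circleMap c p.1 p.2 := by
    unfold circleMap
    fun_prop
  fun_prop

theorem setLIntegral_openAnnulus {r R : ℝ} (hr : 0 < r) (hrR : r ≤ R) (w₀ : ℂ) :
    ∫⁻ w in openAnnulus w₀ r R, (‖w - w₀‖ₑ ^ 2)⁻¹ =
      ENNReal.ofReal (2 * Real.pi) * ENNReal.ofReal (Real.log (R / r)) := by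
  have hA := (isOpen_openAnnulus w₀ r R).measurableSet
  have hcircle : ∀ ρ ∈ Ioi (0 : ℝ), ∀ θ : ℝ, ENNReal.ofReal ρ *
      (openAnnulus w₀ r R).indicator (fun w => (‖w - w₀‖ₑ ^ 2)⁻¹) (circleMap w₀ ρ θ) =
        (Ioo r R).indicator (fun ρ => (ENNReal.ofReal ρ)⁻¹) ρ := by
    intro ρ (hρ : 0 < ρ) θ
    have hnorm : ‖circleMap w₀ ρ θ - w₀‖ = ρ := by
      rw [circleMap_sub_center, norm_circleMap_zero, abs_of_pos hρ]
    have hmem : circleMap w₀ ρ θ ∈ openAnnulus w₀ r R ↔ ρ ∈ Ioo r R := by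
      rw [openAnnulus, mem_ofPred_eq, hnorm]
    by_cases h : ρ ∈ Ioo r R
    · rw [indicator_of_mem (hmem.2 h), indicator_of_mem h, ← ofReal_norm, hnorm, sq,
        ENNReal.mul_inv (by simp) (by simp), ← mul_assoc,
        ENNReal.mul_inv_cancel (by simpa using hρ) ENNReal.ofReal_ne_top, one_mul]
    · rw [indicator_of_notMem (hmem.not.2 h), indicator_of_notMem h, mul_zero]
  rw [← lintegral_indicator hA, lintegral_eq_lintegral_circleMap w₀
    (Measurable.indicator (by fun_prop) hA),
    setLIntegral_congr_fun measurableSet_Ioi fun ρ hρ => lintegral_congr (hcircle ρ hρ)]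
  simp only [lintegral_const, Measure.restrict_apply_univ, Real.volume_Ioo, sub_neg_eq_add,
    ← two_mul]
  rw [lintegral_mul_const' _ _ ENNReal.ofReal_ne_top, mul_comm, setLIntegral_indicator
    measurableSet_Ioo, inter_eq_left.2 (Ioo_subset_Ioi_self.trans (Ioi_subset_Ioi hr.le)),
    setLIntegral_Ioo_inv hr hrR]

theorem lintegral_image_eq_lintegral_enorm_deriv_sq_mul {f f' : ℂ → ℂ} {s : Set ℂ}
    (hs : MeasurableSet s) (hf : ∀ z ∈ s, HasDerivWithinAt f (f' z) s z) (hi : InjOn f s)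
    (g : ℂ → ℝ≥0∞) : ∫⁻ w in f '' s, g w = ∫⁻ z in s, ‖f' z‖ₑ ^ 2 * g (f z) := by
  rw [lintegral_image_eq_lintegral_abs_det_fderiv_mul volume hs
    (fun z hz => (hf z hz).hasFDerivWithinAt.restrictScalars ℝ) hi]
  refine lintegral_congr fun z => ?_
  congr 1
  have hdet : ((ContinuousLinearMap.toSpanSingleton ℂ (f' z)).restrictScalars ℝ).det =
      ‖f' z‖ ^ 2 := by
    simp [ContinuousLinearMap.det, LinearMap.det_restrictScalars, Algebra.norm_complex_eq,
      normSq_eq_norm_sq]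
  rw [hdet, abs_of_nonneg (sq_nonneg _), ENNReal.ofReal_pow (norm_nonneg _), ofReal_norm]

theorem sq_lintegral_le_measure_univ_mul {X : Type*} [MeasurableSpace X] (μ : Measure X)
    {g : X → ℝ≥0∞} (hg : AEMeasurable g μ) : (∫⁻ x, g x ∂μ) ^ 2 ≤ μ univ * ∫⁻ x, g x ^ 2 ∂μ := by
  have hholder := ENNReal.lintegral_mul_le_Lp_mul_Lq μ (p := 2) (q := 2)
    (by constructor <;> norm_num) (f := 1) (g := g) aemeasurable_const hg
  simp only [one_mul, Pi.one_apply, ENNReal.rpow_two, lintegral_const, one_pow, Pi.mul_apply]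
    at hholder
  refine (pow_le_pow_left' hholder 2).trans_eq ?_
  rw [mul_pow, ← ENNReal.rpow_mul_natCast, ← ENNReal.rpow_mul_natCast]
  norm_num

theorem setLIntegral_Ioo_le_of_periodic {g : ℝ → ℝ≥0∞} {T : ℝ} (hT : 0 < T)
    (hg : Function.Periodic g T) {α β t : ℝ} (hβ : β ≤ α + T) :
    ∫⁻ φ in Ioo α β, g φ ≤ ∫⁻ φ in Ioo t (t + T), g φ := by
  have hinv (k : AddSubgroup.zmultiples T) (φ : ℝ) : g (k +ᵥ φ) = g φ := by
    obtain ⟨n, hn⟩ := AddSubgroup.mem_zmultiples_iff.1 k.2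
    rw [AddSubgroup.vadd_def, vadd_eq_add, ← hn, add_comm]
    exact hg.zsmul n φ
  calc ∫⁻ φ in Ioo α β, g φ ≤ ∫⁻ φ in Ioc α (α + T), g φ :=
        lintegral_mono_set (Ioo_subset_Ioc_self.trans (Ioc_subset_Ioc_right hβ))
    _ = ∫⁻ φ in Ioc t (t + T), g φ :=
        (isAddFundamentalDomain_Ioc hT α).setLIntegral_eq (isAddFundamentalDomain_Ioc hT t) g hinv
    _ = ∫⁻ φ in Ioo t (t + T), g φ := by rw [restrict_Ioo_eq_restrict_Ioc]

/-- The density of the length element `‖dw‖ / ‖w - w₀‖` on the annulus `r < ‖w - w₀‖ < R`, pulled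
back by `f : D → ℂ` and extended by `0`. -/
def logLengthDensity (f : ℂ → ℂ) (D : Set ℂ) (w₀ : ℂ) (r R : ℝ) : ℂ → ℝ≥0∞ :=
  (D ∩ f ⁻¹' openAnnulus w₀ r R).indicator fun z => ‖deriv f z‖ₑ / ‖f z - w₀‖ₑ

variable {f : ℂ → ℂ} {D : Set ℂ} {z₀ w₀ : ℂ} {r R s₁ s₂ : ℝ}

theorem measurable_logLengthDensity (hD : IsOpen D) (hf : ContinuousOn f D) :
    Measurable (logLengthDensity f D w₀ r R) := by
  classical
  set S := D ∩ f ⁻¹' openAnnulus w₀ r R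
  have hSm : MeasurableSet S :=
    (hf.isOpen_inter_preimage hD (isOpen_openAnnulus _ _ _)).measurableSet
  have hfS : Measurable (S.indicator f) := by
    rw [← piecewise_eq_indicator]
    exact (hf.mono inter_subset_left).measurable_piecewise continuousOn_const hSm
  have heq : logLengthDensity f D w₀ r R =
      S.indicator fun z => ‖deriv f z‖ₑ / ‖S.indicator f z - w₀‖ₑ :=
    indicator_congr fun z hz => by rw [indicator_of_mem hz]
  rw [heq]
  exact ((measurable_deriv f).enorm.div (hfS.sub_const w₀).enorm).indicator hSm

theorem lintegral_logLengthDensity_sq_le (hD : IsOpen D) (hf : DifferentiableOn ℂ f D)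
    (hi : InjOn f D) (hr : 0 < r) (hrR : r ≤ R) :
    ∫⁻ z, logLengthDensity f D w₀ r R z ^ 2 ≤
      ENNReal.ofReal (2 * Real.pi) * ENNReal.ofReal (Real.log (R / r)) := by
  set S := D ∩ f ⁻¹' openAnnulus w₀ r R
  have hSo : IsOpen S := hf.continuousOn.isOpen_inter_preimage hD (isOpen_openAnnulus _ _ _)
  have hderiv : ∀ z ∈ S, HasDerivWithinAt f (deriv f z) S z := fun z hz =>
    (hf.differentiableAt (hD.mem_nhds hz.1)).hasDerivAt.hasDerivWithinAt
  have hsq : (fun z => logLengthDensity f D w₀ r R z ^ 2) =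
      S.indicator fun z => ‖deriv f z‖ₑ ^ 2 * (‖f z - w₀‖ₑ ^ 2)⁻¹ := by
    funext z
    by_cases hz : z ∈ S
    · rw [indicator_of_mem hz, logLengthDensity, indicator_of_mem hz, ENNReal.div_eq_inv_mul,
        mul_pow, ENNReal.inv_pow, mul_comm]
    · rw [indicator_of_notMem hz, logLengthDensity, indicator_of_notMem hz, zero_pow two_ne_zero]
  rw [hsq, lintegral_indicator hSo.measurableSet,
    ← lintegral_image_eq_lintegral_enorm_deriv_sq_mul hSo.measurableSet hderiv
      (hi.mono inter_subset_left) fun w => (‖w - w₀‖ₑ ^ 2)⁻¹,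
    ← setLIntegral_openAnnulus hr hrR w₀]
  exact lintegral_mono_set (image_subset_iff.2 inter_subset_right)

/-- `f` is continuous on an arc of the circle of radius `s` about `z₀` whose interior lies in `D`,
and maps one point of the arc into the disk `‖w - w₀‖ ≤ r` and another one outside the disk
`‖w - w₀‖ < R`. -/
def HasCrossingArc (f : ℂ → ℂ) (D : Set ℂ) (z₀ w₀ : ℂ) (r R s : ℝ) : Prop :=
  ∃ α β : ℝ, β ≤ α + 2 * Real.pi ∧ MapsTo (circleMap z₀ s) (Ioo α β) D ∧
    ContinuousOn (f ∘ circleMap z₀ s) (Icc α β) ∧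
    (∃ φ ∈ Icc α β, ‖f (circleMap z₀ s φ) - w₀‖ ≤ r) ∧
    ∃ φ ∈ Icc α β, R ≤ ‖f (circleMap z₀ s φ) - w₀‖

theorem HasCrossingArc.log_le_lintegral {s : ℝ} (hs : 0 ≤ s)
    (harc : HasCrossingArc f D z₀ w₀ r R s) (hD : IsOpen D) (hf : DifferentiableOn ℂ f D)
    (hr : 0 < r) (hR : 0 < R) :
    ENNReal.ofReal (Real.log (R / r)) ≤ ∫⁻ φ in Ioo (-Real.pi) Real.pi,
      ENNReal.ofReal s * logLengthDensity f D w₀ r R (circleMap z₀ s φ) := by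
  obtain ⟨α, β, hβ, hmaps, hcont, ⟨φ₁, hφ₁, hfr⟩, φ₂, hφ₂, hfR⟩ := harc
  have hderiv : ∀ φ ∈ Ioo α β, HasDerivAt (f ∘ circleMap z₀ s)
      (circleMap 0 s φ * I * deriv f (circleMap z₀ s φ)) φ := fun φ hφ =>
    (hf.differentiableAt (hD.mem_nhds (hmaps hφ))).hasDerivAt.scomp φ (hasDerivAt_circleMap _ _ _)
  have hmeas : MeasurableSet (Ioo α β ∩ (f ∘ circleMap z₀ s) ⁻¹' openAnnulus w₀ r R) :=
    ((hcont.mono Ioo_subset_Icc_self).isOpen_inter_preimage isOpen_Ioo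
      (isOpen_openAnnulus _ _ _)).measurableSet
  have hperiodic : Function.Periodic
      (fun φ => ENNReal.ofReal s * logLengthDensity f D w₀ r R (circleMap z₀ s φ))
      (2 * Real.pi) := fun φ => by simp only [periodic_circleMap z₀ s φ]
  calc ENNReal.ofReal (Real.log (R / r))
      ≤ ∫⁻ φ in Ioo α β ∩ (f ∘ circleMap z₀ s) ⁻¹' openAnnulus w₀ r R,
          ‖circleMap 0 s φ * I * deriv f (circleMap z₀ s φ)‖ₑ / ‖f (circleMap z₀ s φ) - w₀‖ₑ :=
        ofReal_log_div_le_lintegral hcont hderiv hr hR hφ₁ hφ₂ hfr hfR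
    _ = ∫⁻ φ in Ioo α β ∩ (f ∘ circleMap z₀ s) ⁻¹' openAnnulus w₀ r R,
          ENNReal.ofReal s * logLengthDensity f D w₀ r R (circleMap z₀ s φ) := by
        refine setLIntegral_congr_fun hmeas fun φ hφ => ?_
        rw [logLengthDensity, indicator_of_mem (by exact ⟨hmaps hφ.1, hφ.2⟩), enorm_mul, enorm_mul,
          ← ofReal_norm, norm_circleMap_zero, abs_of_nonneg hs, ← ofReal_norm I, norm_I,
          ENNReal.ofReal_one, mul_one, mul_div_assoc]
    _ ≤ ∫⁻ φ in Ioo α β, ENNReal.ofReal s * logLengthDensity f D w₀ r R (circleMap z₀ s φ) :=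
        lintegral_mono_set inter_subset_left
    _ ≤ ∫⁻ φ in Ioo (-Real.pi) (-Real.pi + 2 * Real.pi),
          ENNReal.ofReal s * logLengthDensity f D w₀ r R (circleMap z₀ s φ) :=
        setLIntegral_Ioo_le_of_periodic Real.two_pi_pos hperiodic hβ
    _ = _ := by rw [two_mul, neg_add_cancel_left]

theorem HasCrossingArc.sq_mul_inv_le_lintegral {s : ℝ} (hs : 0 < s)
    (harc : HasCrossingArc f D z₀ w₀ r R s) (hD : IsOpen D) (hf : DifferentiableOn ℂ f D)
    (hr : 0 < r) (hR : 0 < R) :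
    ENNReal.ofReal (Real.log (R / r)) ^ 2 * (ENNReal.ofReal s)⁻¹ ≤
      ENNReal.ofReal (2 * Real.pi) * ∫⁻ φ in Ioo (-Real.pi) Real.pi,
        ENNReal.ofReal s * logLengthDensity f D w₀ r R (circleMap z₀ s φ) ^ 2 := by
  set g : ℝ → ℝ≥0∞ := fun φ => logLengthDensity f D w₀ r R (circleMap z₀ s φ)
  have hg : Measurable g :=
    (measurable_logLengthDensity hD hf.continuousOn).comp (measurable_circleMap z₀ s)
  have hs₀ : ENNReal.ofReal s ≠ 0 := by simpa using hs
  have hcs := sq_lintegral_le_measure_univ_mul (volume.restrict (Ioo (-Real.pi) Real.pi))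
    (g := fun φ => ENNReal.ofReal s * g φ) (by fun_prop)
  rw [Measure.restrict_apply_univ, Real.volume_Ioo, sub_neg_eq_add, ← two_mul] at hcs
  rw [← div_eq_mul_inv, ENNReal.div_le_iff hs₀ ENNReal.ofReal_ne_top]
  calc ENNReal.ofReal (Real.log (R / r)) ^ 2
      ≤ (∫⁻ φ in Ioo (-Real.pi) Real.pi, ENNReal.ofReal s * g φ) ^ 2 :=
        pow_le_pow_left' (harc.log_le_lintegral hs.le hD hf hr hR) 2
    _ ≤ ENNReal.ofReal (2 * Real.pi) * ∫⁻ φ in Ioo (-Real.pi) Real.pi,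
          (ENNReal.ofReal s * g φ) ^ 2 := hcs
    _ = ENNReal.ofReal (2 * Real.pi) * (∫⁻ φ in Ioo (-Real.pi) Real.pi,
          ENNReal.ofReal s * g φ ^ 2) * ENNReal.ofReal s := by
        rw [mul_assoc, ← lintegral_mul_const' _ _ ENNReal.ofReal_ne_top]
        congr 2 with φ
        ring

theorem log_mul_log_le_of_hasCrossingArc (hD : IsOpen D) (hf : DifferentiableOn ℂ f D)
    (hi : InjOn f D) (hr : 0 < r) (hrR : r < R) (hs₁ : 0 < s₁) (hs : s₁ ≤ s₂)
    (harc : ∀ s ∈ Ioo s₁ s₂, HasCrossingArc f D z₀ w₀ r R s) :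
    Real.log (s₂ / s₁) * Real.log (R / r) ≤ (2 * Real.pi) ^ 2 := by
  have hlog : 0 < Real.log (R / r) := Real.log_pos ((one_lt_div hr).2 hrR)
  have hsq := (measurable_logLengthDensity (w₀ := w₀) (r := r) (R := R) hD
    hf.continuousOn).pow_const 2
  have henn : ENNReal.ofReal (Real.log (R / r)) ^ 2 * ENNReal.ofReal (Real.log (s₂ / s₁)) ≤
      ENNReal.ofReal (2 * Real.pi) *
        (ENNReal.ofReal (2 * Real.pi) * ENNReal.ofReal (Real.log (R / r))) :=
    calc ENNReal.ofReal (Real.log (R / r)) ^ 2 * ENNReal.ofReal (Real.log (s₂ / s₁))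
        = ∫⁻ s in Ioo s₁ s₂, ENNReal.ofReal (Real.log (R / r)) ^ 2 * (ENNReal.ofReal s)⁻¹ := by
          rw [lintegral_const_mul _ (by fun_prop), setLIntegral_Ioo_inv hs₁ hs]
      _ ≤ ∫⁻ s in Ioo s₁ s₂, ENNReal.ofReal (2 * Real.pi) * ∫⁻ φ in Ioo (-Real.pi) Real.pi,
            ENNReal.ofReal s * logLengthDensity f D w₀ r R (circleMap z₀ s φ) ^ 2 :=
          setLIntegral_mono' measurableSet_Ioo fun s hs =>
            (harc s hs).sq_mul_inv_le_lintegral (hs₁.trans hs.1) hD hf hr (hr.trans hrR)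
      _ ≤ ∫⁻ s in Ioi (0 : ℝ), ENNReal.ofReal (2 * Real.pi) * ∫⁻ φ in Ioo (-Real.pi) Real.pi,
            ENNReal.ofReal s * logLengthDensity f D w₀ r R (circleMap z₀ s φ) ^ 2 :=
          lintegral_mono_set (Ioo_subset_Ioi_self.trans (Ioi_subset_Ioi hs₁.le))
      _ = ENNReal.ofReal (2 * Real.pi) * ∫⁻ z, logLengthDensity f D w₀ r R z ^ 2 := by
          rw [lintegral_const_mul' _ _ ENNReal.ofReal_ne_top,
            lintegral_eq_lintegral_circleMap z₀ hsq]
      _ ≤ _ := by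
          gcongr
          exact lintegral_logLengthDensity_sq_le hD hf hi hr hrR.le
  rw [← ENNReal.ofReal_pow hlog.le, ← ENNReal.ofReal_mul (by positivity),
    ← ENNReal.ofReal_mul (by positivity), ← ENNReal.ofReal_mul (by positivity),
    ENNReal.ofReal_le_ofReal_iff (by positivity)] at henn
  refine le_of_mul_le_mul_left ?_ hlog
  linarith

end LengthArea

section CirclesInExteriorOfDisk

variable {c : ℂ} {s : ℝ}

theorem norm_circleMap_sq (c : ℂ) (s φ : ℝ) :
    ‖circleMap c s φ‖ ^ 2 = ‖c‖ ^ 2 + s ^ 2 + 2 * ‖c‖ * s * Real.cos (φ - c.arg) := by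
  have hre : c.re = ‖c‖ * Real.cos c.arg := (norm_mul_cos_arg c).symm
  have him : c.im = ‖c‖ * Real.sin c.arg := (norm_mul_sin_arg c).symm
  rw [← normSq_eq_norm_sq, normSq_apply, circleMap, exp_mul_I, ← ofReal_cos, ← ofReal_sin]
  simp only [add_re, add_im, mul_re, mul_im, ofReal_re, ofReal_im, I_re, I_im, mul_zero, mul_one,
    zero_mul, sub_zero, zero_add, add_zero]
  rw [Real.cos_sub, hre, him]
  linear_combination ‖c‖ ^ 2 * Real.sin_sq_add_cos_sq c.arg + s ^ 2 * Real.sin_sq_add_cos_sq φ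

/-- If `1 ≤ ‖c‖` then the part of a circle about `c` outside the open unit disk is the arc of the
points at angular distance at most `a` from the radial direction `c.arg`. -/
theorem exists_arc_of_one_le_norm (hc : 1 ≤ ‖c‖) (hs : 0 < s) :
    ∃ a ≤ Real.pi, (∀ φ, |φ - c.arg| < a → 1 < ‖circleMap c s φ‖) ∧
      ∀ φ, |φ - c.arg| ≤ Real.pi → (1 ≤ ‖circleMap c s φ‖ ↔ |φ - c.arg| ≤ a) := by
  have hcs : 0 < 2 * ‖c‖ * s := by positivity
  set k : ℝ := (1 - ‖c‖ ^ 2 - s ^ 2) / (2 * ‖c‖ * s) with hk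
  have hk₁ : k ≤ 1 := (div_nonpos_of_nonpos_of_nonneg (by nlinarith) hcs.le).trans zero_le_one
  have hle_iff (φ : ℝ) : 1 ≤ ‖circleMap c s φ‖ ↔ k ≤ Real.cos |φ - c.arg| := by
    rw [← one_le_sq_iff₀ (norm_nonneg _), norm_circleMap_sq, hk, div_le_iff₀ hcs, Real.cos_abs]
    constructor <;> intro h <;> linarith
  have hlt_iff (φ : ℝ) : 1 < ‖circleMap c s φ‖ ↔ k < Real.cos |φ - c.arg| := by
    rw [← one_lt_sq_iff₀ (norm_nonneg _), norm_circleMap_sq, hk, div_lt_iff₀ hcs, Real.cos_abs]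
    constructor <;> intro h <;> linarith
  have hka : k ≤ Real.cos (Real.arccos k) := by
    rcases le_total (-1) k with h | h
    · rw [Real.cos_arccos h hk₁]
    · exact h.trans (Real.neg_one_le_cos _)
  refine ⟨Real.arccos k, Real.arccos_le_pi k, fun φ hφ => ?_,
    fun φ hφπ => ⟨fun h => ?_, fun h => ?_⟩⟩
  · exact (hlt_iff φ).2 (hka.trans_lt
      (Real.cos_lt_cos_of_nonneg_of_le_pi (abs_nonneg _) (Real.arccos_le_pi k) hφ))
  · rw [← Real.arccos_cos (abs_nonneg _) hφπ]
    exact Real.arccos_le_arccos ((hle_iff φ).1 h)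
  · exact (hle_iff φ).2 (hka.trans
      (Real.cos_le_cos_of_nonneg_of_le_pi (abs_nonneg _) (Real.arccos_le_pi k) h))

theorem hasCrossingArc_extDisk {f : ℂ → ℂ} (hf : ContinuousOn f {w | 1 ≤ ‖w‖}) (hc : 1 ≤ ‖c‖)
    (hs : 0 < s) {w₀ t t' : ℂ} {r R : ℝ} (hts : dist t c = s) (ht : 1 ≤ ‖t‖)
    (hfr : ‖f t - w₀‖ ≤ r) (hts' : dist t' c = s) (ht' : 1 ≤ ‖t'‖) (hfR : R ≤ ‖f t' - w₀‖) :
    HasCrossingArc f extDisk c w₀ r R s := by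
  obtain ⟨a, haπ, hlt, hle⟩ := exists_arc_of_one_le_norm hc hs
  have hangle {t : ℂ} (hts : dist t c = s) (ht : 1 ≤ ‖t‖) :
      ∃ φ ∈ Icc (c.arg - a) (c.arg + a), circleMap c s φ = t := by
    have hmem : t ∈ circleMap c s '' Ioc (c.arg - Real.pi) (c.arg + Real.pi) := by
      rw [show c.arg + Real.pi = c.arg - Real.pi + 2 * Real.pi by ring,
        (periodic_circleMap c s).image_Ioc Real.two_pi_pos, range_circleMap, abs_of_pos hs]
      exact hts
    obtain ⟨φ, hφ, rfl⟩ := hmem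
    have hφa := (hle φ (abs_le.2 ⟨by linarith [hφ.1], by linarith [hφ.2]⟩)).1 ht
    exact ⟨φ, mem_Icc_iff_abs_le.1 (by rwa [abs_sub_comm]), rfl⟩
  obtain ⟨φ₁, hφ₁, rfl⟩ := hangle hts ht
  obtain ⟨φ₂, hφ₂, rfl⟩ := hangle hts' ht'
  refine ⟨c.arg - a, c.arg + a, by linarith, fun φ hφ => hlt φ ?_,
    hf.comp (continuous_circleMap c s).continuousOn fun φ hφ => (hle φ ?_).2 ?_,
    ⟨φ₁, hφ₁, hfr⟩, φ₂, hφ₂, hfR⟩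
  · exact abs_lt.2 ⟨by linarith [hφ.1], by linarith [hφ.2]⟩
  all_goals rw [abs_le]; constructor <;> linarith [hφ.1, hφ.2]

end CirclesInExteriorOfDisk

section InverseMap

theorem continuousOn_of_rightInvOn {X Y : Type*} [TopologicalSpace X] [TopologicalSpace Y]
    [T2Space Y] {f : X → Y} {g : Y → X} {A : Set X} {D : Set Y} (hA : IsClosed A)
    (hf : ContinuousOn f A) (hi : InjOn f A) (hg : MapsTo g D A) (hfg : RightInvOn g f D)
    (hcpt : ∀ t ∈ D, ∃ K, IsCompact K ∧ ∀ᶠ s in 𝓝[D] t, g s ∈ K) : ContinuousOn g D := by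
  intro t ht
  obtain ⟨K, hK, hgK⟩ := hcpt t ht
  refine (hK.inter_left hA).tendsto_nhds_of_unique_mapClusterPt ?_ fun y hy hy_cluster => ?_
  · filter_upwards [hgK, self_mem_nhdsWithin] with s hsK hsD using ⟨hg hsD, hsK⟩
  · obtain ⟨U, hU, hUy⟩ := mapClusterPt_iff_ultrafilter.1 hy_cluster
    have hUD : ∀ᶠ s in (U : Filter Y), s ∈ D := hU self_mem_nhdsWithin
    have hgU : Tendsto g U (𝓝[A] y) :=
      tendsto_nhdsWithin_iff.2 ⟨hUy, hUD.mono fun s hs => hg hs⟩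
    have hfg_t : Tendsto (f ∘ g) U (𝓝 t) :=
      (tendsto_id.mono_left (hU.trans nhdsWithin_le_nhds)).congr'
        (hUD.mono fun s hs => (hfg hs).symm)
    have hfyt : f y = t := tendsto_nhds_unique ((hf y hy.1).tendsto.comp hgU) hfg_t
    exact hi hy.1 (hg ht) (hfyt.trans (hfg ht).symm)

variable {f g : ℂ → ℂ} {U V : Set ℂ}

theorem eventually_deriv_ne_zero_of_injOn (hU : IsOpen U) (hf : DifferentiableOn ℂ f U)
    (hi : InjOn f U) {z : ℂ} (hz : z ∈ U) : ∀ᶠ x in 𝓝[≠] z, deriv f x ≠ 0 := by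
  have hderiv : AnalyticAt ℂ (deriv f) z := (hf.analyticAt (hU.mem_nhds hz)).deriv
  refine hderiv.eventually_eq_zero_or_eventually_ne_zero.resolve_left fun hzero => ?_
  obtain ⟨ε, hε, hball⟩ := Metric.eventually_nhds_iff_ball.1 (hzero.and (hU.mem_nhds hz))
  have hconst : ∀ x ∈ ball z ε, f x = f z := fun x hx =>
    isOpen_ball.is_const_of_deriv_eq_zero (convex_ball z ε).isPreconnected
      (hf.mono fun y hy => (hball y hy).2) (fun y hy => (hball y hy).1) hx (mem_ball_self hε)
  have hnear : ∀ᶠ x in 𝓝[≠] z, x ∈ ball z ε := nhdsWithin_le_nhds (ball_mem_nhds z hε)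
  obtain ⟨x, hx, hxz⟩ := (hnear.and self_mem_nhdsWithin).exists
  exact hxz (hi (hball x hx).2 hz (hconst x hx))

/-- The derivative of `g` exists away from the preimages of the zeros of `deriv f`, which are
isolated; there, continuity makes the singularities removable. -/
theorem differentiableOn_of_rightInvOn (hU : IsOpen U) (hV : IsOpen V)
    (hf : DifferentiableOn ℂ f U) (hi : InjOn f U) (hg : MapsTo g V U) (hgc : ContinuousOn g V)
    (hfg : RightInvOn g f V) : DifferentiableOn ℂ g V := by
  intro w hw
  have hcont : ∀ v ∈ V, ContinuousAt g v := fun v hv => hgc.continuousAt (hV.mem_nhds hv)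
  have hpunctured : Tendsto g (𝓝[≠] w) (𝓝[≠] (g w)) := by
    refine tendsto_nhdsWithin_iff.2 ⟨(hcont w hw).tendsto.mono_left nhdsWithin_le_nhds, ?_⟩
    filter_upwards [nhdsWithin_le_nhds (hV.mem_nhds hw), self_mem_nhdsWithin] with v hv hvw
    exact fun hgvw => hvw (hfg.injOn hv hw hgvw)
  refine (analyticAt_of_differentiable_on_punctured_nhds_of_continuousAt ?_
    (hcont w hw)).differentiableAt.differentiableWithinAt
  filter_upwards [hpunctured.eventually (eventually_deriv_ne_zero_of_injOn hU hf hi (hg hw)),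
    nhdsWithin_le_nhds (hV.mem_nhds hw)] with v hv hvV
  refine (HasDerivAt.of_local_left_inverse (hcont v hvV)
    (hf.differentiableAt (hU.mem_nhds (hg hvV))).hasDerivAt hv ?_).differentiableAt
  filter_upwards [hV.mem_nhds hvV] with y hy using hfg hy

end InverseMap

section ExteriorConformalMap

variable {Ω : Set ℂ} {Φ : ℂ → ℂ}

theorem isOpen_extDisk : IsOpen extDisk := isOpen_lt continuous_const continuous_norm

theorem extDisk_subset_setOf_one_le_norm : extDisk ⊆ {w : ℂ | 1 ≤ ‖w‖} :=
  fun w (hw : 1 < ‖w‖) => hw.le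

theorem IsExtConformal.tendsto_cobounded (h : IsExtConformal Ω Φ) :
    Tendsto Φ (cobounded ℂ) (cobounded ℂ) := by
  obtain ⟨c, hc, hlim⟩ := h.2.2
  have hprod : Tendsto (fun z => ‖Φ z / z‖ * ‖z‖) (cobounded ℂ) atTop :=
    hlim.norm.pos_mul_atTop (by simpa using hc.ne') tendsto_norm_cobounded_atTop
  refine tendsto_norm_atTop_iff_cobounded.1 (hprod.congr' ?_)
  filter_upwards [eventually_ne_cobounded (0 : ℂ)] with z hz
  rw [norm_div, div_mul_cancel₀ _ (norm_ne_zero_iff.2 hz)]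

/-- The inverse `{|w| ≥ 1} → closure Ω` of the boundary extension of a conformal map `Φ` of `Ω`
onto the exterior of the disk. -/
def extInverse (Ω : Set ℂ) (Φ : ℂ → ℂ) : ℂ → ℂ := Function.invFunOn Φ (closure Ω)

namespace IsExtConformalClosure

theorem mapsTo_extInverse (hΦ : IsExtConformalClosure Ω Φ) :
    MapsTo (extInverse Ω Φ) {w | 1 ≤ ‖w‖} (closure Ω) := fun _ hw =>
  Function.invFunOn_mem (hΦ.2.2.surjOn hw)

theorem rightInvOn_extInverse (hΦ : IsExtConformalClosure Ω Φ) :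
    RightInvOn (extInverse Ω Φ) Φ {w | 1 ≤ ‖w‖} := fun _ hw =>
  Function.invFunOn_eq (hΦ.2.2.surjOn hw)

theorem leftInvOn_extInverse (hΦ : IsExtConformalClosure Ω Φ) :
    LeftInvOn (extInverse Ω Φ) Φ (closure Ω) :=
  hΦ.2.2.injOn.leftInvOn_invFunOn

theorem mapsTo_extInverse_extDisk (hΦ : IsExtConformalClosure Ω Φ) :
    MapsTo (extInverse Ω Φ) extDisk Ω := by
  intro w hw
  obtain ⟨z, hz, rfl⟩ := hΦ.1.2.1.surjOn hw
  rwa [hΦ.leftInvOn_extInverse (subset_closure hz)]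

theorem continuousOn_extInverse (hΦ : IsExtConformalClosure Ω Φ) :
    ContinuousOn (extInverse Ω Φ) {w | 1 ≤ ‖w‖} := by
  refine continuousOn_of_rightInvOn isClosed_closure hΦ.2.1 hΦ.2.2.injOn hΦ.mapsTo_extInverse
    hΦ.rightInvOn_extInverse fun t _ => ?_
  have hbdd : IsBounded (Φ ⁻¹' ball t 1) := by
    rw [isBounded_def, ← preimage_compl]
    exact hΦ.1.tendsto_cobounded (isBounded_def.1 isBounded_ball)
  refine ⟨closure (Φ ⁻¹' ball t 1), hbdd.isCompact_closure, ?_⟩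
  filter_upwards [nhdsWithin_le_nhds (ball_mem_nhds t one_pos), self_mem_nhdsWithin]
    with s hs hs₁
  refine subset_closure ?_
  rwa [mem_preimage, hΦ.rightInvOn_extInverse hs₁]

theorem differentiableOn_extInverse (hΩ : IsOpen Ω) (hΦ : IsExtConformalClosure Ω Φ) :
    DifferentiableOn ℂ (extInverse Ω Φ) extDisk :=
  differentiableOn_of_rightInvOn hΩ isOpen_extDisk hΦ.1.1 hΦ.1.2.1.injOn
    hΦ.mapsTo_extInverse_extDisk
    (hΦ.continuousOn_extInverse.mono extDisk_subset_setOf_one_le_norm)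
    (hΦ.rightInvOn_extInverse.mono extDisk_subset_setOf_one_le_norm)

end IsExtConformalClosure

end ExteriorConformalMap

section JordanCurve

variable {Γ : Set ℂ}

theorem exists_mem_sphere_eq_neg {E : Type*} [NormedAddCommGroup E] [NormedSpace ℝ E]
    (hE : 1 < Module.rank ℝ E) {f : E → ℝ} {r : ℝ} (hr : 0 ≤ r)
    (hf : ContinuousOn f (sphere 0 r)) : ∃ v ∈ sphere (0 : E) r, f v = f (-v) := by
  have hneg : MapsTo (fun v : E => -v) (sphere 0 r) (sphere 0 r) := fun v hv => by simpa using hv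
  have hf_neg : ContinuousOn (fun v => f (-v)) (sphere 0 r) := hf.comp continuousOn_neg hneg
  obtain ⟨v, hv⟩ := (isConnected_sphere hE (0 : E) hr).nonempty
  have hivt := (isPreconnected_sphere hE (0 : E) r)
  rcases le_total (f v) (f (-v)) with h | h
  · exact hivt.intermediate_value₂ hv (hneg hv) hf hf_neg h (by simpa using h)
  · exact hivt.intermediate_value₂ (hneg hv) hv hf hf_neg (by simpa using h) h

theorem eq_of_arg_neg_div_eq {u v p : ℂ} (hp : p ≠ 0) (huv : ‖u‖ = ‖v‖)
    (h : (-u / p).arg = (-v / p).arg) : u = v := by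
  have := Complex.ext_norm_arg (by simp [huv]) h
  simpa [div_left_inj' hp] using this

theorem neg_div_mem_slitPlane {u p : ℂ} (hp : p ≠ 0) (hu : ‖u‖ = ‖p‖) (hup : u ≠ p) :
    -u / p ∈ slitPlane := by
  have hu₀ : u ≠ 0 := norm_ne_zero_iff.1 (hu ▸ norm_ne_zero_iff.2 hp)
  rw [mem_slitPlane_iff_arg]
  refine ⟨fun harg => hup ?_, div_ne_zero (neg_ne_zero.2 hu₀) hp⟩
  have hone : ‖-u / p‖ = 1 := by rw [norm_div, norm_neg, hu, div_self (norm_ne_zero_iff.2 hp)]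
  have hpolar := norm_mul_exp_arg_mul_I (-u / p)
  rw [harg, hone, exp_pi_mul_I, eq_div_iff hp] at hpolar
  push_cast at hpolar
  linear_combination hpolar

/-- If `σ` omits a point `p`, then `σ` is determined by the argument of `-σ / p`, which is a
continuous real function and hence takes the same value at some pair of antipodal points. -/
theorem surjOn_sphere_of_injOn {σ : ℂ → ℂ} {r : ℝ} (hr : 0 < r)
    (hσ : ContinuousOn σ (sphere 0 r)) (hm : MapsTo σ (sphere 0 r) (sphere 0 r))
    (hi : InjOn σ (sphere 0 r)) : SurjOn σ (sphere 0 r) (sphere 0 r) := by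
  intro p hp
  by_contra homit
  have hp₀ : p ≠ 0 := ne_of_mem_sphere hp hr.ne'
  have hnorm {w : ℂ} (hw : w ∈ sphere (0 : ℂ) r) : ‖σ w‖ = ‖p‖ :=
    (mem_sphere_zero_iff_norm.1 (hm hw)).trans (mem_sphere_zero_iff_norm.1 hp).symm
  have harg : ContinuousOn (fun w => (-σ w / p).arg) (sphere 0 r) :=
    continuousOn_arg.comp (hσ.neg.div_const p) fun w hw =>
      neg_div_mem_slitPlane hp₀ (hnorm hw) fun h => homit ⟨w, hw, h⟩
  obtain ⟨w, hw, hw_neg⟩ := exists_mem_sphere_eq_neg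
    (by rw [rank_real_complex]; exact Nat.one_lt_ofNat) hr.le harg
  have hw' : -w ∈ sphere (0 : ℂ) r := by simpa using hw
  have hww : w = -w :=
    hi hw hw' (eq_of_arg_neg_div_eq hp₀ ((hnorm hw).trans (hnorm hw').symm) hw_neg)
  exact ne_of_mem_sphere hw hr.ne' (self_eq_neg.1 hww)

namespace IsJordanCurve

theorem isCompact (h : IsJordanCurve Γ) : IsCompact Γ := by
  obtain ⟨γ, hγ, -, rfl⟩ := h
  exact (isCompact_sphere 0 1).image_of_continuousOn hγ

theorem subset_image_sphere (h : IsJordanCurve Γ) {κ : ℂ → ℂ} (hκ : ContinuousOn κ (sphere 0 1))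
    (hm : MapsTo κ (sphere 0 1) Γ) (hi : InjOn κ (sphere 0 1)) : Γ ⊆ κ '' sphere 0 1 := by
  obtain ⟨γ, hγ, hγi, rfl⟩ := h
  set g := Function.invFunOn γ (sphere 0 1)
  have hgm : MapsTo g (γ '' sphere 0 1) (sphere 0 1) := fun y hy => Function.invFunOn_mem hy
  have hgγ : RightInvOn g γ (γ '' sphere 0 1) := fun y hy => Function.invFunOn_eq hy
  have hg : ContinuousOn g (γ '' sphere 0 1) :=
    continuousOn_of_rightInvOn isClosed_sphere hγ hγi hgm hgγ fun t _ =>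
      ⟨sphere 0 1, isCompact_sphere 0 1, eventually_mem_nhdsWithin.mono fun s hs => hgm hs⟩
  have hsurj := surjOn_sphere_of_injOn one_pos (hg.comp hκ hm) (hgm.comp hm) (hgγ.injOn.comp hi hm)
  rintro _ ⟨w, hw, rfl⟩
  obtain ⟨v, hv, hvw⟩ := hsurj hw
  exact ⟨v, hv, (hgγ (hm hv)).symm.trans (congrArg γ hvw)⟩

theorem exists_subarcs (h : IsJordanCurve Γ) {a b : ℂ} (ha : a ∈ Γ) (hb : b ∈ Γ) :
    ∃ J₁ J₂ : Set ℂ, IsSubarc Γ J₁ ∧ IsSubarc Γ J₂ ∧ J₁ ∪ J₂ = Γ ∧ J₁ ∩ J₂ = {a, b} := by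
  obtain ⟨γ, hγ, hγi, rfl⟩ := h
  have hmem (φ : ℝ) : circleMap 0 1 φ ∈ sphere (0 : ℂ) 1 := circleMap_mem_sphere 0 zero_le_one φ
  set p : ℝ → ℂ := γ ∘ circleMap 0 1 with hp_def
  have hp : Continuous p := hγ.comp_continuous (continuous_circleMap 0 1) hmem
  have hper : Function.Periodic p (2 * Real.pi) := (periodic_circleMap 0 1).comp γ
  have hpinj (φ : ℝ) : InjOn p (Ico φ (φ + 2 * Real.pi)) :=
    hγi.comp (injOn_circleMap_of_abs_sub_le' one_ne_zero (by simp)) fun ψ _ => hmem ψ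
  have hrange : range p = γ '' sphere 0 1 := by
    rw [hp_def, range_comp, range_circleMap, abs_one]
  have harc (x y : ℝ) : IsSubarc (γ '' sphere 0 1) (p '' Icc x y) :=
    ⟨hrange ▸ image_subset_range _ _, (isCompact_Icc.image hp).isClosed,
      isPreconnected_Icc.image _ hp.continuousOn⟩
  rw [← hrange] at ha hb
  obtain ⟨φ, rfl⟩ := ha
  obtain ⟨θ, rfl⟩ := hb
  obtain ⟨ψ, hψ, hθψ⟩ := hper.exists_mem_Ico Real.two_pi_pos θ φ
  rw [hθψ]
  refine ⟨p '' Icc φ ψ, p '' Icc ψ (φ + 2 * Real.pi), harc _ _, harc _ _, ?_, ?_⟩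
  · rw [← image_union, Icc_union_Icc_eq_Icc hψ.1 hψ.2.le, hper.image_Icc Real.two_pi_pos, hrange]
  refine Subset.antisymm ?_ (pair_subset ⟨⟨φ, left_mem_Icc.2 hψ.1, rfl⟩,
    ⟨_, right_mem_Icc.2 hψ.2.le, hper φ⟩⟩ ⟨⟨ψ, right_mem_Icc.2 hψ.1, rfl⟩,
    ⟨ψ, left_mem_Icc.2 hψ.2.le, rfl⟩⟩)
  rintro _ ⟨⟨s, hs, rfl⟩, t, ht, hts⟩
  rcases ht.2.eq_or_lt with rfl | ht_lt
  · exact Or.inl (hts.symm.trans (hper φ))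
  · have hst : t = s := hpinj φ ⟨hψ.1.trans ht.1, ht_lt⟩ ⟨hs.1, hs.2.trans_lt hψ.2⟩ hts
    exact Or.inr (congrArg p (hs.2.antisymm (hst ▸ ht.1)))

end IsJordanCurve

end JordanCurve

section UnboundedComponent

variable {Γ S : Set ℂ} {z : ℂ}

theorem subset_unboundedComponent (hS : IsPreconnected S) (hSΓ : Disjoint S Γ) (hzS : z ∈ S)
    (hz : z ∈ unboundedComponent Γ) : S ⊆ unboundedComponent Γ := by
  intro y hy
  have hyz := hS.subset_connectedComponentIn hzS hSΓ.subset_compl_right hy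
  exact ⟨hSΓ.notMem_of_mem_left hy, connectedComponentIn_eq hyz ▸ hz.2⟩

theorem mem_unboundedComponent_of_mem_closure (hΓ : IsClosed Γ)
    (hz : z ∈ closure (unboundedComponent Γ)) (hzΓ : z ∉ Γ) : z ∈ unboundedComponent Γ := by
  obtain ⟨ε, hε, hball⟩ := Metric.isOpen_iff.1 hΓ.isOpen_compl z hzΓ
  obtain ⟨y, hy, hzy⟩ := Metric.mem_closure_iff.1 hz ε hε
  exact subset_unboundedComponent (convex_ball z ε).isPreconnected
    (disjoint_left.2 hball) (mem_ball'.2 hzy) hy (mem_ball_self hε)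

theorem isOpen_unboundedComponent (hΓ : IsClosed Γ) : IsOpen (unboundedComponent Γ) := by
  refine Metric.isOpen_iff.2 fun z hz => ?_
  obtain ⟨ε, hε, hball⟩ := Metric.isOpen_iff.1 hΓ.isOpen_compl z hz.1
  exact ⟨ε, hε, subset_unboundedComponent (convex_ball z ε).isPreconnected
    (disjoint_left.2 hball) (mem_ball_self hε) hz⟩

/-- The inverse of `Φ` embeds the unit circle into `Γ`, and hence onto `Γ`. -/
theorem IsJordanCurve.subset_closure_unboundedComponent (hΓ : IsJordanCurve Γ) {Φ : ℂ → ℂ}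
    (hΦ : IsExtConformalClosure (unboundedComponent Γ) Φ) : Γ ⊆ closure (unboundedComponent Γ) := by
  have hsphere : sphere (0 : ℂ) 1 ⊆ {w : ℂ | 1 ≤ ‖w‖} := fun w hw =>
    (mem_sphere_zero_iff_norm.1 hw).ge
  have hm : MapsTo (extInverse (unboundedComponent Γ) Φ) (sphere 0 1) Γ := by
    intro w hw
    by_contra hwΓ
    have hlt : 1 < ‖Φ (extInverse (unboundedComponent Γ) Φ w)‖ := hΦ.1.2.1.mapsTo
      (mem_unboundedComponent_of_mem_closure hΓ.isCompact.isClosed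
        (hΦ.mapsTo_extInverse (hsphere hw)) hwΓ)
    rw [hΦ.rightInvOn_extInverse (hsphere hw), mem_sphere_zero_iff_norm.1 hw] at hlt
    exact lt_irrefl _ hlt
  exact (hΓ.subset_image_sphere (hΦ.continuousOn_extInverse.mono hsphere) hm
    (hΦ.rightInvOn_extInverse.mono hsphere).injOn).trans
    (hΦ.mapsTo_extInverse.mono_left hsphere).image_subset

end UnboundedComponent

section LinearLocalConnectivity

/-- Bounded turning (Ahlfors' three point condition, when `s` is a Jordan curve): any two points
`x`, `y` of `s` lie in a connected subset of `s` of diameter comparable to `dist x y`. That `x` and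
`y` lie in a connected subset of `t` is expressed as `y ∈ connectedComponentIn t x`. -/
def HasBoundedTurning {α : Type*} [PseudoMetricSpace α] (s : Set α) (K : ℝ) : Prop :=
  1 ≤ K ∧ ∀ x ∈ s, ∀ y ∈ s, y ∈ connectedComponentIn (s ∩ closedBall x (K * dist x y)) x

/-- Linear local connectivity with constant `K`: points of `s` in a ball can be joined in `s`
within the `K` times larger ball, and points of `s` outside a ball can be joined in `s` outside the
`K` times smaller ball. -/
structure IsLinearlyLocallyConnected {α : Type*} [PseudoMetricSpace α] (s : Set α) (K : ℝ) :
    Prop where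
  one_le : 1 ≤ K
  mem_of_mem_closedBall : ∀ x r, ∀ p ∈ s ∩ closedBall x r, ∀ q ∈ s ∩ closedBall x r,
    q ∈ connectedComponentIn (s ∩ closedBall x (K * r)) p
  mem_of_mem_compl_ball : ∀ x r, ∀ p ∈ s ∩ (ball x r)ᶜ, ∀ q ∈ s ∩ (ball x r)ᶜ,
    q ∈ connectedComponentIn (s ∩ (ball x (r / K))ᶜ) p

variable {Γ S T : Set ℂ} {K Λ : ℝ}

theorem ofReal_dist_le_hausdorffMeasure {α : Type*} [MetricSpace α] [MeasurableSpace α]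
    [BorelSpace α] {J : Set α} (hJ : IsPreconnected J) {x y : α} (hx : x ∈ J) (hy : y ∈ J) :
    ENNReal.ofReal (dist x y) ≤ μH[1] J := by
  have hL : LipschitzWith 1 fun z : α => dist z y := LipschitzWith.dist_left y
  have himage : Icc 0 (dist x y) ⊆ (fun z : α => dist z y) '' J := by
    simpa using hJ.intermediate_value hy hx hL.continuous.continuousOn
  calc ENNReal.ofReal (dist x y) = μH[1] (Icc 0 (dist x y)) := by simp [hausdorffMeasure_real]
    _ ≤ μH[1] ((fun z : α => dist z y) '' J) := measure_mono himage
    _ ≤ μH[1] J := by simpa using hL.hausdorffMeasure_image_le zero_le_one J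

theorem IsQuasismooth.hasBoundedTurning (h : IsQuasismooth Γ Λ) : HasBoundedTurning Γ (2 * Λ) := by
  refine ⟨by linarith [h.1], fun x hx y hy => ?_⟩
  rcases eq_or_ne x y with rfl | hxy
  · exact mem_connectedComponentIn ⟨hx, by simp⟩
  have hpos : 0 < Λ * dist x y := mul_pos (zero_lt_one.trans_le h.1) (dist_pos.2 hxy)
  have hlt : shorterArcLength Γ x y < ENNReal.ofReal (2 * Λ * dist x y) :=
    (h.2 x hx y hy).trans_lt ((ENNReal.ofReal_lt_ofReal_iff (by linarith)).2 (by linarith))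
  simp only [shorterArcLength, iInf_lt_iff] at hlt
  obtain ⟨J, ⟨⟨hJΓ, -, hJc⟩, hxJ, hyJ⟩, hJ⟩ := hlt
  refine hJc.subset_connectedComponentIn hxJ (subset_inter hJΓ fun z hz => ?_) hyJ
  exact (ENNReal.ofReal_le_ofReal_iff (by linarith)).1
    ((ofReal_dist_le_hausdorffMeasure hJc hz hxJ).trans hJ.le)

/-- If both arcs between `p` and `q` came close to `x`, then a short connected subset of `Γ` would
join them near `x`, and would contain one of their common points `p`, `q`. -/
theorem IsJordanCurve.mem_connectedComponentIn_compl_ball (hΓ : IsJordanCurve Γ)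
    (hK : HasBoundedTurning Γ K) {x p q : ℂ} {r : ℝ} (hp : p ∈ Γ ∩ (ball x r)ᶜ)
    (hq : q ∈ Γ ∩ (ball x r)ᶜ) :
    q ∈ connectedComponentIn (Γ ∩ (ball x (r / (1 + 2 * K)))ᶜ) p := by
  obtain ⟨hK₁, hturn⟩ := hK
  obtain ⟨J₁, J₂, hJ₁, hJ₂, hunion, hinter⟩ := hΓ.exists_subarcs hp.1 hq.1
  have hp' : p ∈ J₁ ∩ J₂ := hinter ▸ mem_insert p {q}
  have hq' : q ∈ J₁ ∩ J₂ := hinter ▸ mem_insert_of_mem p rfl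
  by_cases h₁ : Disjoint J₁ (ball x (r / (1 + 2 * K)))
  · exact hJ₁.2.2.subset_connectedComponentIn hp'.1
      (subset_inter hJ₁.1 h₁.subset_compl_right) hq'.1
  by_cases h₂ : Disjoint J₂ (ball x (r / (1 + 2 * K)))
  · exact hJ₂.2.2.subset_connectedComponentIn hp'.2
      (subset_inter hJ₂.1 h₂.subset_compl_right) hq'.2
  obtain ⟨y, hyJ, hyx⟩ := not_disjoint_iff.1 h₁
  obtain ⟨z, hzJ, hzx⟩ := not_disjoint_iff.1 h₂
  set E := connectedComponentIn (Γ ∩ closedBall y (K * dist y z)) y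
  have hE : E ⊆ Γ ∩ closedBall y (K * dist y z) := connectedComponentIn_subset _ _
  have hyE : y ∈ E := mem_connectedComponentIn ⟨hJ₁.1 hyJ, mem_closedBall_self (by positivity)⟩
  have hzE : z ∈ E := hturn y (hJ₁.1 hyJ) z (hJ₂.1 hzJ)
  obtain ⟨e, heE, heJ⟩ := isPreconnected_closed_iff.1 isPreconnected_connectedComponentIn J₁ J₂
    hJ₁.2.1 hJ₂.2.1 ((hE.trans inter_subset_left).trans_eq hunion.symm) ⟨y, hyE, hyJ⟩ ⟨z, hzE, hzJ⟩
  have he_ball : e ∈ ball x r := by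
    rw [mem_ball, lt_div_iff₀ (by linarith)] at hyx hzx
    have hyz : K * dist y z ≤ K * (dist y x + dist z x) := by
      gcongr; exact dist_triangle_right y z x
    have hey : dist e y ≤ K * dist y z := (hE heE).2
    rw [mem_ball]
    nlinarith [dist_triangle e y x]
  rw [hinter] at heJ
  rcases heJ with rfl | rfl
  exacts [absurd he_ball hp.2, absurd he_ball hq.2]

theorem IsJordanCurve.isLinearlyLocallyConnected (hΓ : IsJordanCurve Γ)
    (hK : HasBoundedTurning Γ K) : IsLinearlyLocallyConnected Γ (1 + 2 * K) where
  one_le := by linarith [hK.1]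
  mem_of_mem_compl_ball _ _ _ hp _ hq := hΓ.mem_connectedComponentIn_compl_ball hK hp hq
  mem_of_mem_closedBall x r p hp q hq := by
    refine connectedComponentIn_mono p (inter_subset_inter_right Γ
      (closedBall_subset_closedBall' ?_)) (hK.2 p hp.1 q hq.1)
    have hpx : dist p x ≤ r := hp.2
    have hqx : dist q x ≤ r := hq.2
    have hpq : K * dist p q ≤ K * (r + r) :=
      mul_le_mul_of_nonneg_left ((dist_triangle_right p q x).trans (add_le_add hpx hqx))
        (by linarith [hK.1])
    linarith

theorem mem_connectedComponentIn_or_exists_mem_of_joinedIn (hΓ : IsClosed Γ)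
    (hcl : Γ ⊆ closure (unboundedComponent Γ)) {p q : ℂ} (hpq : JoinedIn S p q)
    (hp : p ∈ closure (unboundedComponent Γ)) :
    q ∈ connectedComponentIn (closure (unboundedComponent Γ) ∩ S) p ∨
      ∃ a ∈ Γ, a ∈ connectedComponentIn (closure (unboundedComponent Γ) ∩ S) p := by
  by_cases hpΓ : p ∈ Γ
  · exact Or.inr ⟨p, hpΓ, mem_connectedComponentIn ⟨hp, hpq.source_mem⟩⟩
  have hpΩ := mem_unboundedComponent_of_mem_closure hΓ hp hpΓ
  obtain ⟨γ, hγS⟩ := hpq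
  have hγ (I : Set unitInterval) (hI : IsPreconnected I) : IsPreconnected (γ '' I) :=
    hI.image γ γ.continuous.continuousOn
  rcases (γ ⁻¹' Γ).eq_empty_or_nonempty with hempty | hne
  · have hrange : range γ ⊆ unboundedComponent Γ :=
      subset_unboundedComponent (isPreconnected_range γ.continuous)
        (disjoint_right.2 fun a ha hγa => by
          obtain ⟨t, rfl⟩ := hγa
          exact eq_empty_iff_forall_notMem.1 hempty t ha) ⟨0, γ.source⟩ hpΩ
    exact Or.inl ((isPreconnected_range γ.continuous).subset_connectedComponentIn ⟨0, γ.source⟩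
      (subset_inter (hrange.trans subset_closure) (range_subset_iff.2 hγS)) ⟨1, γ.target⟩)
  obtain ⟨t, htΓ, ht_least⟩ := (hΓ.preimage γ.continuous).isCompact.exists_isLeast hne
  have ht₀ : 0 < t := unitInterval.pos_iff_ne_zero.2 fun h =>
    hpΓ (by simpa [h] using htΓ)
  have hbefore : γ '' Iio t ⊆ unboundedComponent Γ :=
    subset_unboundedComponent (hγ _ isPreconnected_Iio)
      (disjoint_left.2 fun a ha haΓ => by
        obtain ⟨s, hs, rfl⟩ := ha
        exact (ht_least haΓ).not_gt hs) ⟨0, ht₀, γ.source⟩ hpΩ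
  refine Or.inr ⟨γ t, htΓ, (hγ _ isPreconnected_Iic).subset_connectedComponentIn
    ⟨0, ht₀.le, γ.source⟩ (subset_inter ?_ (image_subset_iff.2 fun s _ => hγS s))
    ⟨t, self_mem_Iic, rfl⟩⟩
  rw [← Iio_insert, image_insert_eq]
  exact insert_subset (hcl htΓ) (hbefore.trans subset_closure)

/-- A path from `p` to `q` that meets `Γ` is replaced, between its first and its last point on `Γ`,
by a connected subset of `Γ`. -/
theorem mem_connectedComponentIn_closure_of_joinedIn (hΓ : IsClosed Γ)
    (hcl : Γ ⊆ closure (unboundedComponent Γ)) (hST : S ⊆ T)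
    (hΓT : ∀ a ∈ Γ ∩ S, ∀ b ∈ Γ ∩ S, b ∈ connectedComponentIn (Γ ∩ T) a) {p q : ℂ}
    (hpq : JoinedIn S p q) (hp : p ∈ closure (unboundedComponent Γ))
    (hq : q ∈ closure (unboundedComponent Γ)) :
    q ∈ connectedComponentIn (closure (unboundedComponent Γ) ∩ T) p := by
  have hmono (x : ℂ) := connectedComponentIn_mono x
    (inter_subset_inter_right (closure (unboundedComponent Γ)) hST)
  have hmemS {x y : ℂ} (hy : y ∈ connectedComponentIn (closure (unboundedComponent Γ) ∩ S) x) :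
      y ∈ S := (connectedComponentIn_subset _ _ hy).2
  have hqq : q ∈ connectedComponentIn (closure (unboundedComponent Γ) ∩ T) q :=
    mem_connectedComponentIn ⟨hq, hST hpq.target_mem⟩
  rcases mem_connectedComponentIn_or_exists_mem_of_joinedIn hΓ hcl hpq hp with h | ⟨a, haΓ, hpa⟩
  · exact hmono p h
  rcases mem_connectedComponentIn_or_exists_mem_of_joinedIn hΓ hcl hpq.symm hq with
    h | ⟨b, hbΓ, hqb⟩
  · rwa [← connectedComponentIn_eq (hmono q h)]
  have hab := connectedComponentIn_mono a (inter_subset_inter_left T hcl)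
    (hΓT a ⟨haΓ, hmemS hpa⟩ b ⟨hbΓ, hmemS hqb⟩)
  rwa [connectedComponentIn_eq (hmono p hpa), connectedComponentIn_eq hab,
    ← connectedComponentIn_eq (hmono q hqb)]

theorem IsLinearlyLocallyConnected.closure_unboundedComponent (hK : IsLinearlyLocallyConnected Γ K)
    (hΓ : IsClosed Γ) (hcl : Γ ⊆ closure (unboundedComponent Γ)) :
    IsLinearlyLocallyConnected (closure (unboundedComponent Γ)) K where
  one_le := hK.one_le
  mem_of_mem_closedBall x r p hp q hq := by
    have hr : 0 ≤ r := dist_nonneg.trans hp.2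
    exact mem_connectedComponentIn_closure_of_joinedIn hΓ hcl
      (closedBall_subset_closedBall (le_mul_of_one_le_left hr hK.one_le))
      (hK.mem_of_mem_closedBall x r)
      (((convex_closedBall x r).isPathConnected ⟨p, hp.2⟩).joinedIn p hp.2 q hq.2) hp.1 hq.1
  mem_of_mem_compl_ball x r p hp q hq := by
    have hball : ball x (r / K) ⊆ ball x r := by
      rcases le_total 0 r with hr | hr
      · exact ball_subset_ball (div_le_self hr hK.one_le)
      · rw [ball_eq_empty.2 (div_nonpos_of_nonpos_of_nonneg hr (zero_le_one.trans hK.one_le))]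
        exact empty_subset _
    have hE : 1 < Module.rank ℝ ℂ := by rw [rank_real_complex]; exact Nat.one_lt_ofNat
    exact mem_connectedComponentIn_closure_of_joinedIn hΓ hcl (compl_subset_compl.2 hball)
      (hK.mem_of_mem_compl_ball x r)
      ((isPathConnected_compl_ball hE x r).joinedIn p hp.2 q hq.2) hp.1 hq.1

end LinearLocalConnectivity

section Distortion

variable {Ω : Set ℂ} {Φ : ℂ → ℂ} {K : ℝ} {z₁ z₂ z₃ : ℂ}

namespace IsExtConformalClosure

theorem exists_mem_closure_le_dist (hΦ : IsExtConformalClosure Ω Φ) (z t : ℂ) (d s : ℝ) :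
    ∃ q ∈ closure Ω, d ≤ dist q z ∧ s ≤ dist (Φ q) t := by
  have hnear : IsBounded (Φ '' (closure Ω ∩ closedBall z d)) :=
    (((isCompact_closedBall z d).inter_left isClosed_closure).image_of_continuousOn
      (hΦ.2.1.mono inter_subset_left)).isBounded
  obtain ⟨w, hw⟩ := nonempty_compl.2 fun huniv : ball 0 1 ∪ (ball t s ∪ _) = univ =>
    NormedSpace.unbounded_univ ℝ ℂ
      (huniv ▸ isBounded_ball.union (isBounded_ball.union hnear))
  simp only [mem_compl_iff, mem_union, not_or, mem_ball, not_lt, dist_zero_right] at hw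
  obtain ⟨q, hq, rfl⟩ := hΦ.2.2.surjOn hw.1
  refine ⟨q, hq, ?_, hw.2.1⟩
  by_contra! hlt
  exact hw.2.2 ⟨q, ⟨hq, hlt.le⟩, rfl⟩

theorem exists_dist_eq_and_extInverse_mem (hΦ : IsExtConformalClosure Ω Φ) {T : Set ℂ} {p q t : ℂ}
    {s : ℝ} (hp : p ∈ closure Ω ∩ T) (hq : q ∈ connectedComponentIn (closure Ω ∩ T) p)
    (hps : dist (Φ p) t ≤ s) (hsq : s ≤ dist (Φ q) t) :
    ∃ w, dist w t = s ∧ 1 ≤ ‖w‖ ∧ extInverse Ω Φ w ∈ T := by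
  have hE : connectedComponentIn (closure Ω ∩ T) p ⊆ closure Ω ∩ T :=
    connectedComponentIn_subset _ _
  have hcont : ContinuousOn (fun z => dist (Φ z) t) (connectedComponentIn (closure Ω ∩ T) p) :=
    (continuous_id.dist continuous_const).comp_continuousOn
      (hΦ.2.1.mono (hE.trans inter_subset_left))
  obtain ⟨z, hz, hzs⟩ := isPreconnected_connectedComponentIn.intermediate_value
    (mem_connectedComponentIn hp) hq hcont ⟨hps, hsq⟩
  exact ⟨Φ z, hzs, hΦ.2.2.mapsTo (hE hz).1,
    by rw [hΦ.leftInvOn_extInverse (hE hz).1]; exact (hE hz).2⟩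

/-- The circle of radius `s` about `Φ z₁` meets both the image of a connected set joining `z₁` to
`z₃` near `z₁`, and the image of one joining `z₂` to a remote point away from `z₁`. -/
theorem hasCrossingArc_extInverse (hΦ : IsExtConformalClosure Ω Φ)
    (hK : IsLinearlyLocallyConnected (closure Ω) K) (h₁ : z₁ ∈ closure Ω) (h₂ : z₂ ∈ closure Ω)
    (h₃ : z₃ ∈ closure Ω) {s : ℝ} (hs : s ∈ Ioo (dist (Φ z₁) (Φ z₂)) (dist (Φ z₁) (Φ z₃))) :
    HasCrossingArc (extInverse Ω Φ) extDisk (Φ z₁) z₁ (K * dist z₁ z₃) (dist z₁ z₂ / K) s := by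
  have hK₁ := hK.one_le
  have hs₀ : 0 < s := dist_nonneg.trans_lt hs.1
  have hnear := hK.mem_of_mem_closedBall z₁ (dist z₁ z₃) z₁ ⟨h₁, by simp⟩
    z₃ ⟨h₃, (dist_comm z₃ z₁).le⟩
  obtain ⟨w, hws, hw₁, hw⟩ := hΦ.exists_dist_eq_and_extInverse_mem (t := Φ z₁)
    ⟨h₁, mem_closedBall_self (by positivity)⟩ hnear (by simpa using hs₀.le)
    (by rw [dist_comm]; exact hs.2.le)
  obtain ⟨q, hq, hqz, hqΦ⟩ := hΦ.exists_mem_closure_le_dist z₁ (Φ z₁) (dist z₁ z₂) s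
  have hfar := hK.mem_of_mem_compl_ball z₁ (dist z₁ z₂) z₂ ⟨h₂, by simp [dist_comm z₂]⟩
    q ⟨hq, by simpa using hqz⟩
  obtain ⟨w', hws', hw₁', hw'⟩ := hΦ.exists_dist_eq_and_extInverse_mem (t := Φ z₁)
    ⟨h₂, by simpa [dist_comm z₂] using div_le_self dist_nonneg hK₁⟩ hfar
    (by rw [dist_comm]; exact hs.1.le) hqΦ
  refine hasCrossingArc_extDisk hΦ.continuousOn_extInverse (hΦ.2.2.mapsTo h₁) hs₀ hws hw₁ ?_
    hws' hw₁' ?_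
  · simpa [dist_eq_norm] using hw
  · simpa [dist_eq_norm] using hw'

theorem dist_le_of_dist_map_le (hΩ : IsOpen Ω) (hΦ : IsExtConformalClosure Ω Φ)
    (hK : IsLinearlyLocallyConnected (closure Ω) K) (h₁ : z₁ ∈ closure Ω) (h₂ : z₂ ∈ closure Ω)
    (h₃ : z₃ ∈ closure Ω) (h : dist (Φ z₁) (Φ z₂) ≤ dist (Φ z₁) (Φ z₃) / 2) :
    dist z₁ z₂ ≤ K ^ 2 * Real.exp ((2 * Real.pi) ^ 2 / Real.log 2) * dist z₁ z₃ := by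
  have hK₁ : 1 ≤ K := hK.one_le
  rcases eq_or_ne z₁ z₂ with rfl | h₁₂
  · rw [dist_self]; positivity
  have ht : 0 < dist (Φ z₁) (Φ z₂) := dist_pos.2 fun heq => h₁₂ (hΦ.2.2.injOn h₁ h₂ heq)
  have hd₃ : 0 < dist z₁ z₃ := dist_pos.2 fun heq => by
    rw [← heq, dist_self] at h
    linarith
  have hratio : dist z₁ z₂ / K / (K * dist z₁ z₃) ≤ Real.exp ((2 * Real.pi) ^ 2 / Real.log 2) := by
    rcases le_or_gt (dist z₁ z₂ / K) (K * dist z₁ z₃) with hle | hlt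
    · exact ((div_le_one (by positivity)).2 hle).trans
        (Real.one_le_exp (div_nonneg (by positivity) (Real.log_nonneg one_le_two)))
    have hlength := log_mul_log_le_of_hasCrossingArc isOpen_extDisk
      (hΦ.differentiableOn_extInverse hΩ)
      (hΦ.rightInvOn_extInverse.injOn.mono extDisk_subset_setOf_one_le_norm)
      (by positivity) hlt ht (by linarith) fun s hs => hΦ.hasCrossingArc_extInverse hK h₁ h₂ h₃ hs
    have hlog₂ : Real.log 2 ≤ Real.log (dist (Φ z₁) (Φ z₃) / dist (Φ z₁) (Φ z₂)) :=
      Real.log_le_log two_pos ((le_div_iff₀ ht).2 (by linarith))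
    have hlog_nonneg : 0 ≤ Real.log (dist z₁ z₂ / K / (K * dist z₁ z₃)) :=
      Real.log_nonneg ((one_le_div (by positivity)).2 hlt.le)
    refine (Real.log_le_iff_le_exp (by positivity [dist_pos.2 h₁₂])).1
      ((le_div_iff₀' (Real.log_pos one_lt_two)).2 ?_)
    exact (mul_le_mul_of_nonneg_right hlog₂ hlog_nonneg).trans hlength
  rw [div_div, div_le_iff₀ (by positivity)] at hratio
  linarith

theorem isWeaklyQuasisymmetricOn_extInverse (hΩ : IsOpen Ω) (hΦ : IsExtConformalClosure Ω Φ)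
    (hK : IsLinearlyLocallyConnected (closure Ω) K) :
    IsWeaklyQuasisymmetricOn (extInverse Ω Φ) {w | 1 ≤ ‖w‖} := by
  refine (hasQuasiMidpoints_setOf_le_norm zero_le_one).isWeaklyQuasisymmetricOn (by positivity)
    (inv_lt_one_of_one_lt₀ Real.one_lt_sqrt_two)
    (H := K ^ 2 * Real.exp ((2 * Real.pi) ^ 2 / Real.log 2)) (by positivity)
    fun x hx y hy z hz hxyz => ?_
  refine hΦ.dist_le_of_dist_map_le hΩ hK (hΦ.mapsTo_extInverse hx) (hΦ.mapsTo_extInverse hy)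
    (hΦ.mapsTo_extInverse hz) ?_
  rwa [hΦ.rightInvOn_extInverse hx, hΦ.rightInvOn_extInverse hy, hΦ.rightInvOn_extInverse hz]

theorem isWeaklyQuasisymmetricOn (hΩ : IsOpen Ω) (hΦ : IsExtConformalClosure Ω Φ)
    (hK : IsLinearlyLocallyConnected (closure Ω) K) : IsWeaklyQuasisymmetricOn Φ (closure Ω) :=
  (hΦ.isWeaklyQuasisymmetricOn_extInverse hΩ hK).of_rightInvOn
    (isPathConnected_setOf_le_norm (by rw [rank_real_complex]; exact Nat.one_lt_ofNat)
      1).isConnected.isPreconnected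
    hΦ.2.2.mapsTo hΦ.leftInvOn_extInverse

end IsExtConformalClosure

end Distortion

theorem conformal_distortion_equiv_general
    (Γ : Set ℂ) (K : ℝ) (hΓ : IsJordanCurve Γ) (hK : HasBoundedTurning Γ K)
    (Φ : ℂ → ℂ) (hΦ : IsExtConformalClosure (unboundedComponent Γ) Φ) :
    ∀ c > (0:ℝ), ∃ c' > (0:ℝ), ∀ z₁ z₂ z₃ : ℂ,
      z₁ ∈ closure (unboundedComponent Γ) → z₂ ∈ closure (unboundedComponent Γ) →
      z₃ ∈ closure (unboundedComponent Γ) →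
      (dist z₁ z₂ ≤ c * dist z₁ z₃ → dist (Φ z₁) (Φ z₂) ≤ c' * dist (Φ z₁) (Φ z₃)) ∧
      (dist (Φ z₁) (Φ z₂) ≤ c * dist (Φ z₁) (Φ z₃) → dist z₁ z₂ ≤ c' * dist z₁ z₃) := by
  intro c hc
  have hΓc : IsClosed Γ := hΓ.isCompact.isClosed
  have hΩ := isOpen_unboundedComponent hΓc
  have hLLC := (hΓ.isLinearlyLocallyConnected hK).closure_unboundedComponent hΓc
    (hΓ.subset_closure_unboundedComponent hΦ)
  obtain ⟨c₁, hc₁, hmap⟩ := hΦ.isWeaklyQuasisymmetricOn hΩ hLLC c hc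
  obtain ⟨c₂, -, hinv⟩ := hΦ.isWeaklyQuasisymmetricOn_extInverse hΩ hLLC c hc
  refine ⟨max c₁ c₂, lt_max_of_lt_left hc₁, fun z₁ z₂ z₃ h₁ h₂ h₃ => ⟨fun h => ?_, fun h => ?_⟩⟩
  · exact (hmap z₁ h₁ z₂ h₂ z₃ h₃ h).trans (by gcongr; exact le_max_left _ _)
  · have hz := hinv _ (hΦ.2.2.mapsTo h₁) _ (hΦ.2.2.mapsTo h₂) _ (hΦ.2.2.mapsTo h₃) h
    rw [hΦ.leftInvOn_extInverse h₁, hΦ.leftInvOn_extInverse h₂, hΦ.leftInvOn_extInverse h₃] at hz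
    exact hz.trans (by gcongr; exact le_max_right _ _)

/-- Lemma 3.1 (i): for points `z₁,z₂,z₃` in the closure of `Ω` with
`t_j = Φ(z_j)`, the conditions `|z₁-z₂| ≲ |z₁-z₃|` and `|t₁-t₂| ≲ |t₁-t₃|` are equivalent:
for every `c > 0` there is `c' = c'(Γ,c) > 0` such that each implies the other with
constant `c'`. -/
theorem conformal_distortion_equiv
    (Γ : Set ℂ) (Λ : ℝ) (hΓJ : IsJordanCurve Γ) (hΓq : IsQuasismooth Γ Λ)
    (Φ : ℂ → ℂ) (hΦ : IsExtConformalClosure (unboundedComponent Γ) Φ) :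
    ∀ c > (0:ℝ), ∃ c' > (0:ℝ), ∀ z₁ z₂ z₃ : ℂ,
      z₁ ∈ closure (unboundedComponent Γ) → z₂ ∈ closure (unboundedComponent Γ) →
      z₃ ∈ closure (unboundedComponent Γ) →
      (dist z₁ z₂ ≤ c * dist z₁ z₃ → dist (Φ z₁) (Φ z₂) ≤ c' * dist (Φ z₁) (Φ z₃)) ∧
      (dist (Φ z₁) (Φ z₂) ≤ c * dist (Φ z₁) (Φ z₃) → dist z₁ z₂ ≤ c' * dist z₁ z₃) :=
  conformal_distortion_equiv_general Γ (2 * Λ) hΓJ hΓq.hasBoundedTurning Φ hΦ
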